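/- arXiv:2507.00183 — 5 statements merged into one kernel-verified Lean document; each statement's English description precedes it below -/
import Mathlib

section
/- Fix C' > 0 and γ ∈ (0,1). There exist constants c₁, c₂ > 0 and, for each pair of multi-indices (α,β'), a constant C_{α,β'} > 0, all independent of h ∈ (0,1] and q ∈ ℝ², such that the following holds: whenever χ : ℝ²×ℝ² → ℝ satisfies |x| < C' and p̃_q(x,ξ) > γ at every point (x,ξ) of supp χ (and p̃_q > γ/2 on an ε-neighborhood of supp χ for some ε > 0), there exists a smooth function P̃ : ℝ²×ℝ² → ℝ with: (a) P̃ ≡ p̃_q on supp χ; (b) c₁(1+|ξ|²) ≤ P̃(x,ξ) ≤ c₂(1+|ξ|²) for all (x,ξ); (c) |∂_ξ^α ∂_x^{β'} P̃(x,ξ)| ≤ C_{α,β'} h^{−|β'|/2} (1+|ξ|²) for all (x,ξ) and all multi-indices α, β'; (d) P̃(x,ξ) > γ/2 everywhere. -/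
noncomputable section

open MeasureTheory Complex

abbrev R2 : Type := EuclideanSpace ℝ (Fin 2)

/-- Partial derivative of a complex-valued function in coordinate direction `j`. -/
def pdC (j : Fin 2) (f : R2 → ℂ) (x : R2) : ℂ :=
  fderiv ℝ f x (EuclideanSpace.single j 1)

/-- The operator `D_j = -i ∂_j` acting on complex-valued functions. -/
def Dop (j : Fin 2) (f : R2 → ℂ) (x : R2) : ℂ := -Complex.I * pdC j f x

/-- Partial derivative of a real-valued function in coordinate direction `j`. -/
def pdR (j : Fin 2) (f : R2 → ℝ) (x : R2) : ℝ :=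
  fderiv ℝ f x (EuclideanSpace.single j 1)

/-- The Laplacian of a real-valued function. -/
def lapR (f : R2 → ℝ) (x : R2) : ℝ := pdR 0 (pdR 0 f) x + pdR 1 (pdR 1 f) x

/-- The rescaled potential `φ_h(x) = φ(h^{-1/2} x)`. -/
def phih (φ : R2 → ℝ) (h : ℝ) (x : R2) : ℝ := φ ((h ^ (-(1/2 : ℝ)) : ℝ) • x)

/-- `A u = (h/2) D₁ u - (h/2) (∂₂ φ_h) u`. -/
def opAh (φ : R2 → ℝ) (h : ℝ) (u : R2 → ℂ) (x : R2) : ℂ :=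
  ((h / 2 : ℝ) : ℂ) * Dop 0 u x - ((h / 2 * pdR 1 (phih φ h) x : ℝ) : ℂ) * u x

/-- `B u = (h/2) D₂ u + (h/2) (∂₁ φ_h) u`. -/
def opBh (φ : R2 → ℝ) (h : ℝ) (u : R2 → ℂ) (x : R2) : ℂ :=
  ((h / 2 : ℝ) : ℂ) * Dop 1 u x + ((h / 2 * pdR 0 (phih φ h) x : ℝ) : ℂ) * u x

/-- `P u = A² u + B² u - (h²/4)(Δ φ_h) u - u`. -/
def opPh (φ : R2 → ℝ) (h : ℝ) (u : R2 → ℂ) (x : R2) : ℂ :=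
  opAh φ h (opAh φ h u) x + opBh φ h (opBh φ h u) x
    - ((h ^ 2 / 4 * lapR (phih φ h) x : ℝ) : ℂ) * u x - u x

/-- The symbol `ã_q(x,ξ) = ξ₁/2 - (h/2)(∂₂φ_h)(x+q) + (h/2)(∂₂φ_h)(q)`. -/
def symA (φ : R2 → ℝ) (h : ℝ) (q : R2) (z : R2 × R2) : ℝ :=
  z.2 0 / 2 - h / 2 * pdR 1 (phih φ h) (z.1 + q) + h / 2 * pdR 1 (phih φ h) q

/-- The symbol `b̃_q(x,ξ) = ξ₂/2 + (h/2)(∂₁φ_h)(x+q) - (h/2)(∂₁φ_h)(q)`. -/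
def symB (φ : R2 → ℝ) (h : ℝ) (q : R2) (z : R2 × R2) : ℝ :=
  z.2 1 / 2 + h / 2 * pdR 0 (phih φ h) (z.1 + q) - h / 2 * pdR 0 (phih φ h) q

/-- The symbol `p̃_q = ã_q² + b̃_q² - ((h²/4)(Δφ_h)(x) + 1)`. -/
def symP (φ : R2 → ℝ) (h : ℝ) (q : R2) (z : R2 × R2) : ℝ :=
  symA φ h q z ^ 2 + symB φ h q z ^ 2 - (h ^ 2 / 4 * lapR (phih φ h) z.1 + 1)

/-- Directional derivative of a function on phase space `ℝ²×ℝ²`. -/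
def pdir (v : R2 × R2) (f : R2 × R2 → ℝ) (z : R2 × R2) : ℝ := fderiv ℝ f z v

/-- The `i`-th coordinate direction in the `x`-variables. -/
def eX (i : Fin 2) : R2 × R2 := (EuclideanSpace.single i 1, 0)

/-- The `i`-th coordinate direction in the `ξ`-variables. -/
def eXi (i : Fin 2) : R2 × R2 := (0, EuclideanSpace.single i 1)

/-- The mixed partial derivative `∂_ξ^α ∂_x^β f` on phase space. -/
def mixedPartial (α β : Fin 2 → ℕ) (f : R2 × R2 → ℝ) : R2 × R2 → ℝ :=
  (pdir (eX 0))^[β 0] ((pdir (eX 1))^[β 1] ((pdir (eXi 0))^[α 0] ((pdir (eXi 1))^[α 1] f)))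

/-- Family `f` of smooth functions whose derivatives are uniformly controlled by the weight `w`. -/
def BD {ι E : Type*} [NormedAddCommGroup E] [NormedSpace ℝ E]
    (w : ι → E → ℝ) (f : ι → E → ℝ) : Prop :=
  (∀ i, ContDiff ℝ (⊤ : ℕ∞) (f i)) ∧
    ∀ n : ℕ, ∃ C : ℝ, 0 ≤ C ∧ ∀ i z, ‖iteratedFDeriv ℝ n (f i) z‖ ≤ C * w i z

section BDlemmas

variable {ι E F : Type*} [NormedAddCommGroup E] [NormedSpace ℝ E]
  [NormedAddCommGroup F] [NormedSpace ℝ F]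

lemma BD.mono {w w' : ι → E → ℝ} {f : ι → E → ℝ} (hf : BD w f) (K : ℝ) (hK : 0 ≤ K)
    (hw : ∀ i z, w i z ≤ K * w' i z) : BD w' f := by
  refine ⟨hf.1, fun n => ?_⟩
  obtain ⟨C, hC, h⟩ := hf.2 n
  refine ⟨C * K, by positivity, fun i z => (h i z).trans ?_⟩
  rw [mul_assoc]
  exact mul_le_mul_of_nonneg_left (hw i z) hC

lemma BD.add {w : ι → E → ℝ} {f g : ι → E → ℝ} (hf : BD w f) (hg : BD w g) :
    BD w (fun i z => f i z + g i z) := by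
  refine ⟨fun i => (hf.1 i).add (hg.1 i), fun n => ?_⟩
  obtain ⟨C, hC, h⟩ := hf.2 n
  obtain ⟨D, hD, k⟩ := hg.2 n
  refine ⟨C + D, by positivity, fun i z => ?_⟩
  have e : iteratedFDeriv ℝ n (fun z => f i z + g i z) z
      = iteratedFDeriv ℝ n (f i) z + iteratedFDeriv ℝ n (g i) z :=
    iteratedFDeriv_add_apply (((hf.1 i).of_le (by exact_mod_cast le_top)).contDiffAt)
      (((hg.1 i).of_le (by exact_mod_cast le_top)).contDiffAt)
  rw [e]
  refine (norm_add_le _ _).trans ?_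
  linarith [h i z, k i z]

lemma BD.mul {w w' : ι → E → ℝ} {f g : ι → E → ℝ} (hf : BD w f) (hg : BD w' g) :
    BD (fun i z => w i z * w' i z) (fun i z => f i z * g i z) := by
  refine ⟨fun i => (hf.1 i).mul (hg.1 i), fun n => ?_⟩
  choose C hC h using hf.2
  choose D hD k using hg.2
  refine ⟨∑ i ∈ Finset.range (n + 1), (n.choose i : ℝ) * C i * D (n - i),
    Finset.sum_nonneg fun i _ => by have := hC i; have := hD (n - i); positivity,
    fun i z => ?_⟩
  refine (norm_iteratedFDeriv_mul_le (hf.1 i) (hg.1 i) z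
    (by exact_mod_cast le_top)).trans ?_
  rw [Finset.sum_mul]
  refine Finset.sum_le_sum fun j _ => ?_
  have h1 := h j i z
  have h2 := k (n - j) i z
  calc _ ≤ (n.choose j : ℝ) * (C j * w i z) * (D (n - j) * w' i z) := by
        have := (norm_nonneg _).trans h1
        gcongr
    _ = _ := by ring

/-- Constants (depending on the index) bounded by `1`. -/
lemma BD.const (c : ι → ℝ) (K : ℝ) (hc : ∀ i, |c i| ≤ K) :
    BD (fun _ (_ : E) => 1) (fun i (_ : E) => c i) := by
  refine ⟨fun i => contDiff_const, fun n => ⟨|K|, abs_nonneg _, fun i z => ?_⟩⟩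
  rcases Nat.eq_zero_or_pos n with rfl | hn
  · rw [norm_iteratedFDeriv_zero, Real.norm_eq_abs, mul_one]
    exact (hc i).trans (le_abs_self _)
  · rw [iteratedFDeriv_const_of_ne hn.ne']
    simp

lemma BD.comp {w : ι → F → ℝ} {f : ι → F → ℝ} (hf : BD w f) (L : ι → E →L[ℝ] F)
    (hL : ∀ i, ‖L i‖ ≤ 1) :
    BD (fun i z => w i (L i z)) (fun i z => f i (L i z)) := by
  refine ⟨fun i => (hf.1 i).comp (L i).contDiff, fun n => ?_⟩
  obtain ⟨C, hC, h⟩ := hf.2 n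
  refine ⟨C, hC, fun i z => ?_⟩
  have e := (L i).iteratedFDeriv_comp_right (hf.1 i) z (i := n) (by exact_mod_cast le_top)
  change ‖iteratedFDeriv ℝ n (f i ∘ L i) z‖ ≤ _
  rw [e]
  refine ((ContinuousMultilinearMap.norm_compContinuousLinearMap_le _ _).trans ?_).trans (h i _)
  refine mul_le_of_le_one_right (norm_nonneg _) ?_
  exact Finset.prod_le_one (fun _ _ => norm_nonneg _) (fun _ _ => hL i)

lemma BD.clm (L : E →L[ℝ] ℝ) : BD (fun (_ : ι) z => 1 + ‖L z‖) (fun _ z => L z) := by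
  refine ⟨fun i => L.contDiff, fun n => ?_⟩
  match n with
  | 0 =>
    refine ⟨1, zero_le_one, fun i z => ?_⟩
    rw [norm_iteratedFDeriv_zero]; linarith
  | 1 =>
    refine ⟨‖L‖, norm_nonneg _, fun i z => ?_⟩
    rw [← norm_iteratedFDeriv_fderiv, norm_iteratedFDeriv_zero, L.fderiv]
    exact le_mul_of_one_le_right (norm_nonneg _) (by linarith [norm_nonneg (L z)])
  | k + 2 =>
    refine ⟨0, le_rfl, fun i z => ?_⟩
    rw [← norm_iteratedFDeriv_fderiv]
    have : fderiv ℝ (fun z => L z) = fun _ => L := by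
      ext1 z; exact L.fderiv
    rw [this, iteratedFDeriv_const_of_ne (by simp)]
    simp

/-- Composition with a smooth function vanishing where the weight is not bounded. -/
lemma BD.comp_cut {w : ι → E → ℝ} {f : ι → E → ℝ} (hf : BD w f) (g : ℝ → ℝ)
    (hg : ContDiff ℝ (⊤ : ℕ∞) g) (γ W K : ℝ) (hg0 : ∀ t, γ ≤ t → g t = 0)
    (hW : ∀ i z, w i z ≤ W ∨ γ < f i z) (hK : ∀ i z, -K ≤ f i z) :
    BD (fun _ _ => 1) (fun i z => g (f i z)) := by
  refine ⟨fun i => hg.comp (hf.1 i), fun n => ?_⟩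
  choose C hC h using hf.2
  have hb : ∀ m : ℕ, ∃ B : ℝ, 0 ≤ B ∧
      ∀ t ∈ Set.Icc (-K) γ, ‖iteratedFDeriv ℝ m g t‖ ≤ B := by
    intro m
    obtain ⟨B, hB⟩ := isCompact_Icc.exists_bound_of_continuousOn (s := Set.Icc (-K) γ)
      (hg.continuous_iteratedFDeriv (m := m) (by exact_mod_cast le_top)).continuousOn
    exact ⟨|B|, abs_nonneg _, fun t ht => (hB t ht).trans (le_abs_self _)⟩
  choose B hB0 hB using hb
  set D : ℝ := 1 + ∑ k ∈ Finset.range (n + 1), C k * |W| with hD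
  set M : ℝ := ∑ k ∈ Finset.range (n + 1), B k with hM
  have hsn : 0 ≤ ∑ k ∈ Finset.range (n + 1), C k * |W| :=
    Finset.sum_nonneg fun k _ => mul_nonneg (hC k) (abs_nonneg _)
  have hD1 : 1 ≤ D := by linarith
  have hM0 : 0 ≤ M := Finset.sum_nonneg fun k _ => hB0 k
  refine ⟨n.factorial * M * D ^ n, by positivity, fun i z => ?_⟩
  rw [mul_one]
  by_cases hz : γ < f i z
  · have e : (fun z => g (f i z)) =ᶠ[nhds z] fun _ => (0 : ℝ) := by
      have : ∀ᶠ y in nhds z, γ < f i y :=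
        (hf.1 i).continuous.continuousAt.eventually (lt_mem_nhds hz)
      filter_upwards [this] with y hy using hg0 _ hy.le
    rw [(e.iteratedFDeriv ℝ n).eq_of_nhds]
    have : iteratedFDeriv ℝ n (fun _ : E => (0 : ℝ)) z = 0 := by
      rw [iteratedFDeriv_fun_zero]; rfl
    rw [this, norm_zero]; positivity
  · have hw := (hW i z).resolve_right hz
    refine norm_iteratedFDeriv_comp_le (g := g) (f := f i) hg (hf.1 i)
      (by exact_mod_cast le_top) z (fun m hm => ?_) (fun m hm1 hm => ?_)
    · refine (hB m _ ⟨hK i z, not_lt.1 hz⟩).trans ?_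
      exact Finset.single_le_sum (f := B) (fun k _ => hB0 k) (by simp; omega)
    · have h1 : ‖iteratedFDeriv ℝ m (f i) z‖ ≤ C m * |W| :=
        (h m i z).trans (mul_le_mul_of_nonneg_left (hw.trans (le_abs_self _)) (hC m))
      have h2 : C m * |W| ≤ ∑ k ∈ Finset.range (n + 1), C k * |W| :=
        Finset.single_le_sum (f := fun k => C k * |W|)
          (fun k _ => mul_nonneg (hC k) (abs_nonneg _)) (by simp; omega)
      exact (h1.trans (by linarith)).trans (le_self_pow₀ hD1 (by omega))

/-- Iterated directional derivatives are controlled by iterated Fréchet derivatives. -/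
lemma pdir_iter (v : R2 × R2) (k : ℕ) (g : R2 × R2 → ℝ) (hg : ContDiff ℝ (⊤ : ℕ∞) g) :
    ContDiff ℝ (⊤ : ℕ∞) ((pdir v)^[k] g) ∧ ∀ n z,
      ‖iteratedFDeriv ℝ n ((pdir v)^[k] g) z‖ ≤ ‖v‖ ^ k * ‖iteratedFDeriv ℝ (n + k) g z‖ := by
  induction k with
  | zero => exact ⟨hg, fun n z => by simp⟩
  | succ k ih =>
    obtain ⟨h1, h2⟩ := ih
    have hfd : ContDiff ℝ (⊤ : ℕ∞) (fderiv ℝ ((pdir v)^[k] g)) :=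
      h1.fderiv_right (by simp)
    rw [Function.iterate_succ_apply']
    refine ⟨hfd.clm_apply contDiff_const, fun n z => ?_⟩
    have := norm_iteratedFDeriv_clm_apply_const (c := v) (x := z) hfd.contDiffAt (n := n)
      (by exact_mod_cast le_top)
    refine this.trans ?_
    rw [norm_iteratedFDeriv_fderiv]
    calc _ ≤ ‖v‖ * (‖v‖ ^ k * ‖iteratedFDeriv ℝ (n + 1 + k) g z‖) := by
          gcongr; exact h2 _ _
      _ = _ := by rw [show n + 1 + k = n + (k + 1) by ring]; ring

lemma pdir_iter_comp (L : R2 × R2 →L[ℝ] R2 × R2) (v : R2 × R2) (k : ℕ) (g : R2 × R2 → ℝ)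
    (hg : ContDiff ℝ (⊤ : ℕ∞) g) :
    (pdir v)^[k] (g ∘ L) = ((pdir (L v))^[k] g) ∘ L := by
  induction k with
  | zero => rfl
  | succ k ih =>
    rw [Function.iterate_succ_apply', Function.iterate_succ_apply', ih]
    ext z
    have hd : Differentiable ℝ ((pdir (L v))^[k] g) :=
      (pdir_iter (L v) k g hg).1.differentiable (by simp)
    simp only [pdir, Function.comp_apply]
    rw [fderiv_comp _ (hd _) L.differentiableAt, L.fderiv]
    rfl

lemma mixedPartial_comp_le (L : R2 × R2 →L[ℝ] R2 × R2) (t : ℝ)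
    (hX : ∀ i, ‖L (eX i)‖ ≤ t) (hXi : ∀ i, ‖L (eXi i)‖ ≤ 1) (α β : Fin 2 → ℕ)
    (g : R2 × R2 → ℝ) (hg : ContDiff ℝ (⊤ : ℕ∞) g) (z : R2 × R2) :
    |mixedPartial α β (g ∘ L) z| ≤ t ^ (β 0 + β 1) *
      ‖iteratedFDeriv ℝ (β 0 + β 1 + α 0 + α 1) g (L z)‖ := by
  have s1 := pdir_iter (L (eXi 1)) (α 1) g hg
  have s2 := pdir_iter (L (eXi 0)) (α 0) _ s1.1
  have s3 := pdir_iter (L (eX 1)) (β 1) _ s2.1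
  have s4 := pdir_iter (L (eX 0)) (β 0) _ s3.1
  have ht : 0 ≤ t := (norm_nonneg _).trans (hX 0)
  unfold mixedPartial
  rw [pdir_iter_comp L _ _ _ hg, pdir_iter_comp L _ _ _ s1.1, pdir_iter_comp L _ _ _ s2.1,
    pdir_iter_comp L _ _ _ s3.1, Function.comp_apply, ← Real.norm_eq_abs,
    ← norm_iteratedFDeriv_zero (𝕜 := ℝ)]
  have key : ∀ n, 0 ≤ ‖iteratedFDeriv ℝ n g (L z)‖ := fun n => norm_nonneg _
  calc _ ≤ t ^ β 0 * (t ^ β 1 * (1 ^ α 0 * (1 ^ α 1 *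
        ‖iteratedFDeriv ℝ (0 + β 0 + β 1 + α 0 + α 1) g (L z)‖))) := by
        refine (s4.2 _ _).trans (mul_le_mul (pow_le_pow_left₀ (norm_nonneg _) (hX 0) _) ?_
          (norm_nonneg _) (by positivity))
        refine (s3.2 _ _).trans (mul_le_mul (pow_le_pow_left₀ (norm_nonneg _) (hX 1) _) ?_
          (norm_nonneg _) (by positivity))
        refine (s2.2 _ _).trans (mul_le_mul (pow_le_pow_left₀ (norm_nonneg _) (hXi 0) _) ?_
          (norm_nonneg _) (by positivity))
        refine (s1.2 _ _).trans (mul_le_mul (pow_le_pow_left₀ (norm_nonneg _) (hXi 1) _) ?_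
          (norm_nonneg _) (by positivity))
        exact le_rfl
    _ = _ := by rw [zero_add, pow_add]; simp only [one_pow, one_mul]; ring

end BDlemmas

section Specific

lemma pdR_smooth (j : Fin 2) {f : R2 → ℝ} (hf : ContDiff ℝ (⊤ : ℕ∞) f) :
    ContDiff ℝ (⊤ : ℕ∞) (pdR j f) :=
  (hf.fderiv_right (m := (⊤ : ℕ∞)) (by simp)).clm_apply contDiff_const

lemma pdR_bound (j : Fin 2) {f : R2 → ℝ} (hf : ContDiff ℝ (⊤ : ℕ∞) f) (n : ℕ) (x : R2) :
    ‖iteratedFDeriv ℝ n (pdR j f) x‖ ≤ ‖iteratedFDeriv ℝ (n + 1) f x‖ := by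
  have hfd : ContDiff ℝ (⊤ : ℕ∞) (fderiv ℝ f) := hf.fderiv_right (by simp)
  have := norm_iteratedFDeriv_clm_apply_const (c := EuclideanSpace.single j (1 : ℝ)) (x := x)
    hfd.contDiffAt (n := n) (by exact_mod_cast le_top)
  refine this.trans ?_
  rw [norm_iteratedFDeriv_fderiv]
  simp

lemma pdR_phih (φ : R2 → ℝ) (j : Fin 2) (h : ℝ) :
    pdR j (phih φ h) = fun x => h ^ (-(1/2 : ℝ)) * phih (pdR j φ) h x := by
  ext x
  unfold pdR phih
  rw [fderiv_comp_smul]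
  simp

lemma pdR_const_mul (c : ℝ) (j : Fin 2) {f : R2 → ℝ} (hf : Differentiable ℝ f) (x : R2) :
    pdR j (fun x => c * f x) x = c * pdR j f x := by
  unfold pdR
  rw [fderiv_const_mul (hf x)]
  simp

lemma lapR_phih (φ : R2 → ℝ) (hφ : ContDiff ℝ (⊤ : ℕ∞) φ) (h : ℝ) (x : R2) :
    lapR (phih φ h) x = (h ^ (-(1/2 : ℝ))) ^ 2 * phih (lapR φ) h x := by
  have hd : ∀ j, Differentiable ℝ (phih (pdR j φ) h) := fun j =>
    ((pdR_smooth j hφ).differentiable (by simp)).comp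
      (g := pdR j φ) (f := fun x : R2 => (h ^ (-(1/2 : ℝ)) : ℝ) • x) (by fun_prop)
  unfold lapR
  rw [pdR_phih, pdR_phih, pdR_const_mul _ _ (hd 0), pdR_const_mul _ _ (hd 1), pdR_phih, pdR_phih]
  unfold phih
  ring

/-- Index set: scales `s = √h` and rescaled centers. -/
abbrev Idx : Type := {p : ℝ × R2 // 0 < p.1 ∧ p.1 ≤ 1}

lemma bump_BD (χ : ContDiffBump (0 : R2)) :
    BD (fun (_ : Idx) (x : R2) => (1 + ‖x‖)⁻¹) (fun _ x => χ x) := by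
  refine ⟨fun i => χ.contDiff, fun n => ?_⟩
  have hc : Continuous fun x => (1 + ‖x‖) * ‖iteratedFDeriv ℝ n χ x‖ :=
    (continuous_const.add continuous_norm).mul
      ((χ.contDiff (n := (⊤ : ℕ∞))).continuous_iteratedFDeriv
        (by exact_mod_cast le_top)).norm
  have hs : HasCompactSupport fun x => (1 + ‖x‖) * ‖iteratedFDeriv ℝ n χ x‖ :=
    ((χ.hasCompactSupport.iteratedFDeriv (𝕜 := ℝ) n).norm).mul_left
  obtain ⟨B, hB⟩ := hc.bounded_above_of_compact_support hs
  refine ⟨|B|, abs_nonneg _, fun i x => ?_⟩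
  have h1 := (hB x).trans (le_abs_self B)
  have hp : 0 < 1 + ‖x‖ := by positivity
  rw [Real.norm_of_nonneg (by positivity)] at h1
  rw [← div_eq_mul_inv, le_div_iff₀ hp, mul_comm]
  exact h1

lemma sclm_norm (i : Idx) : ‖i.1.1 • ContinuousLinearMap.id ℝ R2‖ ≤ 1 := by
  rw [norm_smul]
  refine mul_le_one₀ ?_ (norm_nonneg _) ContinuousLinearMap.norm_id_le
  rw [Real.norm_of_nonneg i.2.1.le]; exact i.2.2

lemma diff_BD (g : R2 → ℝ) (hg : ContDiff ℝ (⊤ : ℕ∞) g)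
    (hb : ∀ n : ℕ, 1 ≤ n → ∃ C : ℝ, ∀ x, ‖iteratedFDeriv ℝ n g x‖ ≤ C) :
    BD (fun (i : Idx) (y : R2) => 1 + ‖i.1.1 • y‖)
      (fun i y => i.1.1 * (g (y + i.1.2) - g i.1.2)) := by
  have hsm : ∀ a : R2, ContDiff ℝ (⊤ : ℕ∞) (fun y => g (y + a) - g a) := fun a =>
    (hg.comp (contDiff_id.add contDiff_const)).sub contDiff_const
  refine ⟨fun i => contDiff_const.mul (hsm _), fun n => ?_⟩
  rcases Nat.eq_zero_or_pos n with rfl | hn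
  · obtain ⟨C, hC⟩ := hb 1 le_rfl
    refine ⟨|C|, abs_nonneg _, fun i y => ?_⟩
    rw [norm_iteratedFDeriv_zero, norm_mul]
    have hl : ‖g (y + i.1.2) - g i.1.2‖ ≤ |C| * ‖(y + i.1.2) - i.1.2‖ := by
      refine convex_univ.norm_image_sub_le_of_norm_fderiv_le (𝕜 := ℝ)
        (fun x _ => hg.differentiable (by simp) x) (fun x _ => ?_) trivial trivial
      rw [← norm_iteratedFDeriv_zero (𝕜 := ℝ) (f := fderiv ℝ g), norm_iteratedFDeriv_fderiv]
      exact (hC x).trans (le_abs_self _)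
    rw [add_sub_cancel_right] at hl
    change _ ≤ |C| * (1 + ‖i.1.1 • y‖)
    rw [norm_smul]
    calc _ ≤ ‖i.1.1‖ * (|C| * ‖y‖) := by gcongr
      _ = |C| * (‖i.1.1‖ * ‖y‖) := by ring
      _ ≤ _ := by gcongr; linarith
  · obtain ⟨C, hC⟩ := hb n hn
    refine ⟨|C|, abs_nonneg _, fun i y => ?_⟩
    have e1 : iteratedFDeriv ℝ n (fun y => i.1.1 * (g (y + i.1.2) - g i.1.2)) y
        = i.1.1 • iteratedFDeriv ℝ n (fun y => g (y + i.1.2) - g i.1.2) y :=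
      iteratedFDeriv_const_smul_apply' (a := i.1.1)
        ((hsm i.1.2).of_le (by exact_mod_cast le_top)).contDiffAt
    have e2 : iteratedFDeriv ℝ n (fun y => g (y + i.1.2) - g i.1.2) y
        = iteratedFDeriv ℝ n g (y + i.1.2) := by
      have := iteratedFDeriv_sub_apply (𝕜 := ℝ) (i := n) (x := y) (f := fun y => g (y + i.1.2))
        (g := fun _ => g i.1.2)
        ((hg.comp (contDiff_id.add contDiff_const)).of_le
          (by exact_mod_cast le_top)).contDiffAt contDiffAt_const
      rw [iteratedFDeriv_const_of_ne (by omega)] at this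
      simp only [Pi.zero_apply, sub_zero] at this
      rw [iteratedFDeriv_comp_add_right] at this
      exact this
    rw [e1, e2, norm_smul, Real.norm_of_nonneg i.2.1.le]
    calc _ ≤ 1 * |C| := by
          gcongr
          · exact i.2.2
          · exact (hC _).trans (le_abs_self _)
      _ = |C| * 1 := by ring
      _ ≤ _ := by gcongr; linarith [norm_nonneg (i.1.1 • y)]

/-- The cut off, rescaled magnetic potential. -/
def uu (χ : ContDiffBump (0 : R2)) (g : R2 → ℝ) (i : Idx) (z : R2 × R2) : ℝ :=
  χ (i.1.1 • z.1) * (i.1.1 * (g (z.1 + i.1.2) - g i.1.2))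

lemma uu_BD (χ : ContDiffBump (0 : R2)) (g : R2 → ℝ) (hg : ContDiff ℝ (⊤ : ℕ∞) g)
    (hb : ∀ n : ℕ, 1 ≤ n → ∃ C : ℝ, ∀ x, ‖iteratedFDeriv ℝ n g x‖ ≤ C) :
    BD (fun _ _ => 1) (uu χ g) := by
  have h1 := (bump_BD χ).comp (fun i : Idx => i.1.1 • ContinuousLinearMap.id ℝ R2) sclm_norm
  have h2 := (h1.mul (diff_BD g hg hb)).comp (E := R2 × R2)
    (fun _ => ContinuousLinearMap.fst ℝ R2 R2)
    (fun _ => ContinuousLinearMap.norm_fst_le ℝ R2 R2)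
  refine h2.mono 1 zero_le_one fun i z => ?_
  have hp : (1 + ‖i.1.1 • z.1‖) ≠ 0 := by positivity
  simp [inv_mul_cancel₀ hp]

/-- The rescaled symbol. -/
def pp (χ : ContDiffBump (0 : R2)) (φ : R2 → ℝ) (i : Idx) (z : R2 × R2) : ℝ :=
  (z.2 0 / 2 - uu χ (pdR 1 φ) i z / 2) ^ 2 + (z.2 1 / 2 + uu χ (pdR 0 φ) i z / 2) ^ 2
    - (i.1.1 ^ 2 / 4 * lapR φ z.1 + 1)

lemma lap_BD (φ : R2 → ℝ) (hφ : ContDiff ℝ (⊤ : ℕ∞) φ)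
    (hb : ∀ n : ℕ, 2 ≤ n → ∃ C : ℝ, ∀ x : R2, ‖iteratedFDeriv ℝ n φ x‖ ≤ C) :
    BD (fun (_ : Idx) (_ : R2 × R2) => 1) (fun _ z => lapR φ z.1) := by
  have h1 : ∀ j, BD (fun (_ : Idx) (_ : R2) => 1) (fun _ z => pdR j (pdR j φ) z) := by
    intro j
    refine ⟨fun _ => pdR_smooth j (pdR_smooth j hφ), fun n => ?_⟩
    obtain ⟨C, hC⟩ := hb (n + 2) (by omega)
    refine ⟨|C|, abs_nonneg _, fun i z => ?_⟩
    rw [mul_one]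
    exact (pdR_bound j (pdR_smooth j hφ) n z).trans ((pdR_bound j hφ (n + 1) z).trans
      ((hC z).trans (le_abs_self _)))
  exact ((h1 0).add (h1 1)).comp (E := R2 × R2)
    (fun _ => ContinuousLinearMap.fst ℝ R2 R2)
    (fun _ => ContinuousLinearMap.norm_fst_le ℝ R2 R2)

lemma coord_BD (j : Fin 2) :
    BD (fun (_ : Idx) (z : R2 × R2) => 1 + ‖z.2‖) (fun _ z => z.2 j) := by
  have h := BD.clm (ι := Idx) ((EuclideanSpace.proj j : R2 →L[ℝ] ℝ).comp
    (ContinuousLinearMap.snd ℝ R2 R2))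
  refine h.mono 1 zero_le_one fun i z => ?_
  have : ‖z.2 j‖ ≤ ‖z.2‖ := PiLp.norm_apply_le z.2 j
  simpa using this

lemma pp_BD (χ : ContDiffBump (0 : R2)) (φ : R2 → ℝ) (hφ : ContDiff ℝ (⊤ : ℕ∞) φ)
    (hb : ∀ n : ℕ, 2 ≤ n → ∃ C : ℝ, ∀ x : R2, ‖iteratedFDeriv ℝ n φ x‖ ≤ C) :
    BD (fun (_ : Idx) (z : R2 × R2) => 1 + ‖z.2‖ ^ 2) (pp χ φ) := by
  have hu : ∀ j, BD (fun _ _ => 1) (uu χ (pdR j φ)) := fun j =>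
    uu_BD χ _ (pdR_smooth j hφ) fun n hn => by
      obtain ⟨C, hC⟩ := hb (n + 1) (by omega)
      exact ⟨C, fun x => (pdR_bound j hφ n x).trans (hC x)⟩
  have hc : ∀ c : ℝ, BD (fun (_ : Idx) (_ : R2 × R2) => 1) (fun _ _ => c) := fun c =>
    BD.const _ |c| fun _ => le_rfl
  have hl : ∀ (j k : Fin 2) (c : ℝ), BD (fun (_ : Idx) (z : R2 × R2) => 1 + ‖z.2‖)
      (fun i z => (1 / 2) * z.2 j + c * uu χ (pdR k φ) i z) := fun j k c =>
    (((hc (1 / 2)).mul (coord_BD j)).mono 1 zero_le_one fun i z => by simp).add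
      (((hc c).mul (hu k)).mono 1 zero_le_one fun i z => by simp)
  have hsq : ∀ (j k : Fin 2) (c : ℝ), BD (fun (_ : Idx) (z : R2 × R2) => 1 + ‖z.2‖ ^ 2)
      (fun i z => ((1 / 2) * z.2 j + c * uu χ (pdR k φ) i z) *
        ((1 / 2) * z.2 j + c * uu χ (pdR k φ) i z)) := fun j k c =>
    ((hl j k c).mul (hl j k c)).mono 2 (by norm_num) fun i z => by
      nlinarith [sq_nonneg (1 - ‖z.2‖)]
  have hs : BD (fun (_ : Idx) (_ : R2 × R2) => 1) (fun i _ => -(i.1.1 ^ 2 / 4)) :=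
    BD.const _ 1 fun i => by
      rw [abs_neg, abs_of_nonneg (by positivity)]
      nlinarith [i.2.1, i.2.2]
  have hV : BD (fun (_ : Idx) (z : R2 × R2) => 1 + ‖z.2‖ ^ 2)
      (fun i z => -(i.1.1 ^ 2 / 4) * lapR φ z.1 + (-1)) :=
    (((hs.mul (lap_BD φ hφ hb)).mono 1 zero_le_one fun i z => by simp).add (hc (-1))).mono 1
      zero_le_one fun i z => by simp
  have := ((hsq 0 1 (-(1 / 2))).add (hsq 1 0 (1 / 2))).add hV
  convert this using 3 with i z
  unfold pp
  ring

lemma pp_lower (χ : ContDiffBump (0 : R2)) (φ : R2 → ℝ) (hφ : ContDiff ℝ (⊤ : ℕ∞) φ)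
    (hb : ∀ n : ℕ, 2 ≤ n → ∃ C : ℝ, ∀ x : R2, ‖iteratedFDeriv ℝ n φ x‖ ≤ C) :
    ∃ K : ℝ, 0 ≤ K ∧ ∀ (i : Idx) (z : R2 × R2), ‖z.2‖ ^ 2 / 8 - K ≤ pp χ φ i z := by
  have hu : ∀ j, BD (fun _ _ => 1) (uu χ (pdR j φ)) := fun j =>
    uu_BD χ _ (pdR_smooth j hφ) fun n hn => by
      obtain ⟨C, hC⟩ := hb (n + 1) (by omega)
      exact ⟨C, fun x => (pdR_bound j hφ n x).trans (hC x)⟩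
  obtain ⟨A, hA0, hA⟩ := (hu 0).2 0
  obtain ⟨B, hB0, hB⟩ := (hu 1).2 0
  obtain ⟨M, hM0, hM⟩ := (lap_BD φ hφ hb).2 0
  refine ⟨A ^ 2 + B ^ 2 + M + 1, by positivity, fun i z => ?_⟩
  have h0 := hA i z
  have h1 := hB i z
  have h2 := hM i z
  rw [norm_iteratedFDeriv_zero, Real.norm_eq_abs, mul_one] at h0 h1 h2
  have h0' : uu χ (pdR 0 φ) i z ^ 2 ≤ A ^ 2 := sq_le_sq' (by linarith [abs_le.1 h0]) (abs_le.1 h0).2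
  have h1' : uu χ (pdR 1 φ) i z ^ 2 ≤ B ^ 2 := sq_le_sq' (by linarith [abs_le.1 h1]) (abs_le.1 h1).2
  have hs0 := i.2.1
  have hs1 := i.2.2
  have h3 : i.1.1 ^ 2 / 4 * lapR φ z.1 ≤ M := by
    have hs2 : i.1.1 ^ 2 / 4 ≤ 1 := by nlinarith
    calc _ ≤ i.1.1 ^ 2 / 4 * M := by gcongr; exact (abs_le.1 h2).2
      _ ≤ _ := mul_le_of_le_one_left hM0 hs2
  have hn : ‖z.2‖ ^ 2 = z.2 0 ^ 2 + z.2 1 ^ 2 := by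
    rw [EuclideanSpace.norm_sq_eq, Fin.sum_univ_two]; simp
  unfold pp
  rw [hn]
  nlinarith [sq_nonneg (z.2 0 / 4 - uu χ (pdR 1 φ) i z / 2 + z.2 0 / 8 * 0),
    sq_nonneg (z.2 0 / 2 - uu χ (pdR 1 φ) i z), sq_nonneg (z.2 1 / 2 + uu χ (pdR 0 φ) i z),
    sq_nonneg (uu χ (pdR 1 φ) i z), sq_nonneg (uu χ (pdR 0 φ) i z)]

/-- The cut off function: `t + cutg γ t` equals `t` for `t ≥ γ` and is at least `3γ/4`. -/
def cutg (γ t : ℝ) : ℝ := (3 * γ / 4 - t) * (1 - Real.smoothTransition ((t - 3 * γ / 4) / (γ / 4)))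

lemma cutg_smooth (γ : ℝ) : ContDiff ℝ (⊤ : ℕ∞) (cutg γ) :=
  (contDiff_const.sub contDiff_id).mul (contDiff_const.sub
    (Real.smoothTransition.contDiff.comp ((contDiff_id.sub contDiff_const).div_const _)))

lemma cutg_zero {γ : ℝ} (hγ : 0 < γ) (t : ℝ) (ht : γ ≤ t) : cutg γ t = 0 := by
  unfold cutg
  rw [Real.smoothTransition.one_of_one_le]
  · simp
  · rw [le_div_iff₀ (by positivity)]; linarith

lemma cutg_lower {γ : ℝ} (hγ : 0 < γ) (t : ℝ) : 3 * γ / 4 ≤ t + cutg γ t := by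
  unfold cutg
  rcases le_total t (3 * γ / 4) with h | h
  · rw [Real.smoothTransition.zero_of_nonpos
      (div_nonpos_of_nonpos_of_nonneg (by linarith) (by positivity))]
    linarith
  · nlinarith [Real.smoothTransition.nonneg ((t - 3 * γ / 4) / (γ / 4))]

lemma cutg_lower' {γ : ℝ} (hγ : 0 < γ) (t : ℝ) : t - γ ≤ t + cutg γ t := by
  rcases le_total t γ with h | h
  · linarith [cutg_lower hγ t]
  · rw [cutg_zero hγ t h]; linarith

end Specific

/-- Elliptic extension lemma: if `p̃_q > γ` on `supp χ` (with `|x| < C'` there, and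
`p̃_q > γ/2` on an `ε`-neighborhood), then `p̃_q` extends to a globally elliptic symbol
`P̃ ∈ S_{0,1/2}(⟨ξ⟩²)` with `P̃ > γ/2` everywhere, uniformly in `h` and `q`. -/
theorem stmt4 (φ : R2 → ℝ) (hφ_smooth : ContDiff ℝ (⊤ : ℕ∞) φ)
    (hφ_bd : ∀ n : ℕ, 2 ≤ n → ∃ C : ℝ, ∀ x : R2, ‖iteratedFDeriv ℝ n φ x‖ ≤ C)
    (C' : ℝ) (hC' : 0 < C') (γ : ℝ) (hγ : γ ∈ Set.Ioo (0 : ℝ) 1) :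
    ∃ c₁ > (0 : ℝ), ∃ c₂ > (0 : ℝ), ∃ Cc : (Fin 2 → ℕ) → (Fin 2 → ℕ) → ℝ,
      (∀ α β' : Fin 2 → ℕ, 0 < Cc α β') ∧
      ∀ h ∈ Set.Ioc (0 : ℝ) 1, ∀ q : R2, ∀ χ : R2 × R2 → ℝ,
        (∀ z ∈ tsupport χ, ‖z.1‖ < C') →
        (∀ z ∈ tsupport χ, γ < symP φ h q z) →
        (∃ ε > (0 : ℝ), ∀ z : R2 × R2, (∃ w ∈ tsupport χ, dist z w < ε) →
          γ / 2 < symP φ h q z) →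
        ∃ Pt : R2 × R2 → ℝ, ContDiff ℝ (⊤ : ℕ∞) Pt ∧
          (∀ z ∈ tsupport χ, Pt z = symP φ h q z) ∧
          (∀ z : R2 × R2, c₁ * (1 + ‖z.2‖ ^ 2) ≤ Pt z ∧ Pt z ≤ c₂ * (1 + ‖z.2‖ ^ 2)) ∧
          (∀ α β' : Fin 2 → ℕ, ∀ z : R2 × R2,
            |mixedPartial α β' Pt z| ≤
              Cc α β' * h ^ (-((∑ i, (β' i : ℝ)) / 2)) * (1 + ‖z.2‖ ^ 2)) ∧
          (∀ z : R2 × R2, γ / 2 < Pt z) := by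
  obtain ⟨hγ0, hγ1⟩ := hγ
  let χ0 : ContDiffBump (0 : R2) := ⟨C', C' + 1, hC', by linarith⟩
  obtain ⟨K, hK0, hK⟩ := pp_lower χ0 φ hφ_smooth hφ_bd
  have hp := pp_BD χ0 φ hφ_smooth hφ_bd
  have hcut := hp.comp_cut (cutg γ) (cutg_smooth γ) γ (1 + 8 * (K + 2)) K (cutg_zero hγ0)
    (fun i z => by
      rcases le_or_gt (‖z.2‖ ^ 2) (8 * (K + 2)) with h | h
      · left; linarith
      · right; linarith [hK i z])
    (fun i z => by nlinarith [hK i z, sq_nonneg ‖z.2‖])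
  have hQ := hp.add (hcut.mono (w' := fun (_ : Idx) (z : R2 × R2) => 1 + ‖z.2‖ ^ 2) 1 zero_le_one
    (fun i z => by simp))
  obtain ⟨hQs, hQb⟩ := hQ
  choose Cn hCn0 hCn using hQb
  set a : ℝ := 3 * γ / 4 with ha
  set R : ℝ := 16 * (K + 2) with hR
  have ha0 : 0 < a := by positivity
  have hR0 : 0 < R := by positivity
  have hlow : ∀ (i : Idx) (z : R2 × R2), min (a / (1 + R)) (1 / 16) * (1 + ‖z.2‖ ^ 2)
      ≤ pp χ0 φ i z + cutg γ (pp χ0 φ i z) := by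
    intro i z
    have hr : 0 ≤ ‖z.2‖ ^ 2 := by positivity
    rcases le_total (‖z.2‖ ^ 2) R with h | h
    · refine le_trans ?_ (cutg_lower hγ0 _)
      calc _ ≤ a / (1 + R) * (1 + R) := by
            gcongr
            exact min_le_left _ _
        _ = a := by field_simp
        _ ≤ _ := le_rfl
    · refine le_trans ?_ (cutg_lower' hγ0 _)
      calc _ ≤ 1 / 16 * (1 + ‖z.2‖ ^ 2) := by gcongr; exact min_le_right _ _
        _ ≤ _ := by linarith [hK i z]
  refine ⟨min (a / (1 + R)) (1 / 16), by positivity, Cn 0 + 1, by linarith [hCn0 0],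
    fun α β => Cn (β 0 + β 1 + α 0 + α 1) + 1, fun α β => by linarith [hCn0 (β 0 + β 1 + α 0 + α 1)],
    ?_⟩
  rintro h ⟨hh0, hh1⟩ q χ hχ1 hχ2 -
  set s : ℝ := h ^ (1 / 2 : ℝ) with hs
  have hs0 : 0 < s := Real.rpow_pos_of_pos hh0 _
  have hs1 : s ≤ 1 := Real.rpow_le_one hh0.le hh1 (by norm_num)
  have hsi : h ^ (-(1 / 2 : ℝ)) = s⁻¹ := Real.rpow_neg hh0.le _
  have hss : h = s ^ 2 := by
    rw [hs, ← Real.rpow_natCast, ← Real.rpow_mul hh0.le]; norm_num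
  let i : Idx := ⟨(s, s⁻¹ • q), hs0, hs1⟩
  let L : R2 × R2 →L[ℝ] R2 × R2 :=
    (s⁻¹ • ContinuousLinearMap.fst ℝ R2 R2).prod (ContinuousLinearMap.snd ℝ R2 R2)
  have hL : ∀ z, L z = (s⁻¹ • z.1, z.2) := fun z => rfl
  set Q : R2 × R2 → ℝ := fun z => pp χ0 φ i z + cutg γ (pp χ0 φ i z) with hQdef
  have hQi : ContDiff ℝ (⊤ : ℕ∞) Q := hQs i
  have hpeq : ∀ z : R2 × R2, ‖z.1‖ < C' → pp χ0 φ i (L z) = symP φ h q z := by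
    intro z hz
    have hone : χ0 (s • (s⁻¹ • z.1)) = 1 := by
      rw [smul_smul, mul_inv_cancel₀ hs0.ne', one_smul]
      exact χ0.one_of_mem_closedBall (by simpa using hz.le)
    unfold symP symA symB
    rw [lapR_phih φ hφ_smooth]
    simp only [pdR_phih]
    unfold pp uu phih
    rw [hL]
    simp only [i, hone, hsi, smul_add]
    rw [hss]
    field_simp
    ring
  refine ⟨Q ∘ L, hQi.comp L.contDiff, ?_, ?_, ?_, ?_⟩
  · intro z hz
    have e := hpeq z (hχ1 z hz)
    simp only [hQdef, Function.comp_apply, e]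
    rw [cutg_zero hγ0 _ (hχ2 z hz).le, add_zero]
  · intro z
    refine ⟨hlow i (L z), ?_⟩
    have h1 := hCn 0 i (L z)
    rw [norm_iteratedFDeriv_zero] at h1
    refine (le_abs_self _).trans (h1.trans ?_)
    change Cn 0 * (1 + ‖z.2‖ ^ 2) ≤ _
    gcongr
    linarith
  · intro α β z
    have hX : ∀ j, ‖L (eX j)‖ ≤ s⁻¹ := fun j => by
      rw [hL]; simp [eX, Prod.norm_def, norm_smul, abs_of_pos hs0, hs0.le]
    have hXi : ∀ j, ‖L (eXi j)‖ ≤ 1 := fun j => by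
      rw [hL]; simp [eXi, Prod.norm_def]
    have h1 := mixedPartial_comp_le L s⁻¹ hX hXi α β Q hQi z
    have hpow : h ^ (-((∑ j, (β j : ℝ)) / 2)) = s⁻¹ ^ (β 0 + β 1) := by
      rw [← hsi, ← Real.rpow_natCast, ← Real.rpow_mul hh0.le, Fin.sum_univ_two]
      congr 1
      push_cast
      ring
    rw [hpow]
    refine h1.trans ?_
    have h2 := hCn (β 0 + β 1 + α 0 + α 1) i (L z)
    calc _ ≤ s⁻¹ ^ (β 0 + β 1) * (Cn (β 0 + β 1 + α 0 + α 1) * (1 + ‖z.2‖ ^ 2)) := by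
          gcongr
          exact h2
      _ = Cn (β 0 + β 1 + α 0 + α 1) * s⁻¹ ^ (β 0 + β 1) * (1 + ‖z.2‖ ^ 2) := by ring
      _ ≤ _ := by
          gcongr
          linarith
  · intro z
    have := cutg_lower hγ0 (pp χ0 φ i (L z))
    simp only [hQdef, Function.comp_apply]
    linarith
end
end

section
/- Let β ∈ C_c^∞(ℝ²) and set β_q(x) := β(x−q) for q ∈ ℝ². There is a constant C > 0, depending only on φ and β, such that for every h ∈ (0,1] and every Schwartz function u : ℝ² → ℂ satisfying Pu = 0: sup_{q ∈ ℝ²} ‖P(β_q u)‖_{L²(ℝ²)} ≤ C h ‖u‖_{L²(ℝ²)}. -/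
noncomputable section

open MeasureTheory Complex

lemma aux_T_schwartz (c : ℝ) (V : R2 → ℝ) (hV : V.HasTemperateGrowth) (j : Fin 2)
    (u : SchwartzMap R2 ℂ) :
    ∃ w : SchwartzMap R2 ℂ, ∀ x, w x = (c : ℂ) * Dop j u x - ((V x : ℝ) : ℂ) * u x := by
  refine ⟨((c : ℂ) * (-Complex.I)) • (LineDeriv.lineDerivOp (EuclideanSpace.single j (1:ℝ)) u)
    - SchwartzMap.smulLeftCLM ℂ V u, fun x => ?_⟩
  simp [SchwartzMap.smulLeftCLM_apply_apply hV, SchwartzMap.lineDerivOp_apply_eq_fderiv, Dop, pdC]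
  ring

lemma aux_energy (c : ℝ) (V : R2 → ℝ) (hV : V.HasTemperateGrowth) (j : Fin 2)
    (u w z : SchwartzMap R2 ℂ)
    (hw : ∀ x, w x = (c : ℂ) * Dop j u x - ((V x : ℝ) : ℂ) * u x)
    (hz : ∀ x, z x = (c : ℂ) * Dop j w x - ((V x : ℝ) : ℂ) * w x) :
    ∫ x, inner ℝ (u x) (z x) = ∫ x, ‖w x‖ ^ 2 := by
  set e : R2 := EuclideanSpace.single j (1:ℝ) with he
  have key := SchwartzMap.integral_bilinear_lineDerivOp_right_eq_neg_left (μ := volume)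
    ((Complex.I) • u) w (innerSL ℝ) e
  have hint : ∀ f g : SchwartzMap R2 ℂ, Integrable (fun x => inner ℝ (f x) (g x)) := by
    intro f g
    exact (SchwartzMap.bilinLeftCLM (innerSL ℝ) g.hasTemperateGrowth f).integrable.congr
      (Filter.Eventually.of_forall fun x => by
        rw [SchwartzMap.bilinLeftCLM_apply _ g.hasTemperateGrowth]; rfl)
  have h1 : ∀ x, inner ℝ (u x) (z x) = c * innerSL ℝ ((Complex.I • u) x)
      ((LineDeriv.lineDerivOp e w : SchwartzMap R2 ℂ) x) - inner ℝ (u x) ((SchwartzMap.smulLeftCLM ℂ V w) x) := by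
    intro x
    rw [hz]
    simp only [SchwartzMap.smulLeftCLM_apply_apply hV, SchwartzMap.lineDerivOp_apply_eq_fderiv, Dop, pdC, ← he]
    simp [Complex.inner]
    ring
  have h2 : ∀ x, ‖w x‖ ^ 2 = (-c) * innerSL ℝ ((LineDeriv.lineDerivOp e (Complex.I • u) : SchwartzMap R2 ℂ) x) (w x)
       - inner ℝ (u x) ((SchwartzMap.smulLeftCLM ℂ V w) x) := by
    intro x
    rw [← real_inner_self_eq_norm_sq]
    nth_rw 1 [hw]
    simp only [SchwartzMap.smulLeftCLM_apply_apply hV, LineDeriv.lineDerivOp_smul, smul_apply, SchwartzMap.lineDerivOp_apply_eq_fderiv, Dop, pdC, ← he]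
    simp [Complex.inner]
    ring
  have hint2 : ∀ f g : SchwartzMap R2 ℂ, Integrable (fun x => innerSL ℝ (f x) (g x)) := hint
  simp_rw [h1, h2]
  rw [integral_sub ((hint2 _ _).const_mul c) (hint _ _), integral_sub ((hint2 _ _).const_mul (-c)) (hint _ _),
    integral_const_mul, integral_const_mul, key]
  ring

lemma aux_Dop_mul (j : Fin 2) (f u : R2 → ℂ) (x : R2) (hf : DifferentiableAt ℝ f x)
    (hu : DifferentiableAt ℝ u x) :
    Dop j (fun y => f y * u y) x = f x * Dop j u x + Dop j f x * u x := by
  simp only [Dop, pdC]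
  rw [fderiv_fun_mul hf hu]
  simp
  ring

lemma aux_Dop_smooth (j : Fin 2) (f : R2 → ℂ) (hf : ContDiff ℝ (⊤ : ℕ∞) f) :
    ContDiff ℝ (⊤ : ℕ∞) (Dop j f) := by
  unfold Dop pdC
  have : ContDiff ℝ (⊤ : ℕ∞) (fderiv ℝ f) := hf.fderiv_right (by simp)
  fun_prop

lemma aux_Dop_supp (j : Fin 2) (f : R2 → ℂ) (hf : HasCompactSupport f) :
    HasCompactSupport (Dop j f) := by
  refine (hf.fderiv (𝕜 := ℝ)).mono ?_
  intro x hx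
  simp only [Function.mem_support, Dop, pdC] at hx ⊢
  intro h0
  simp [h0] at hx

lemma aux_Dop_shift (j : Fin 2) (f : R2 → ℂ) (q : R2) :
    Dop j (fun y => f (y - q)) = fun x => Dop j f (x - q) := by
  funext x
  simp only [Dop, pdC]
  rw [fderiv_comp_sub]

lemma aux_comm (c : ℝ) (V : R2 → ℝ) (j : Fin 2) (f : R2 → ℂ) (hf : ContDiff ℝ (⊤ : ℕ∞) f)
    (u w : SchwartzMap R2 ℂ)
    (hw : ∀ x, w x = (c : ℂ) * Dop j u x - ((V x : ℝ) : ℂ) * u x) (T : (R2 → ℂ) → R2 → ℂ)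
    (hT : ∀ v x, T v x = (c : ℂ) * Dop j v x - ((V x : ℝ) : ℂ) * v x) (x : R2) :
    T (T (fun y => f y * u y)) x = f x * T w x + 2 * c * Dop j f x * w x
      + c ^ 2 * Dop j (Dop j f) x * u x := by
  have hfd : Differentiable ℝ f := hf.differentiable (by simp)
  have hDd : Differentiable ℝ (Dop j f) := (aux_Dop_smooth j f hf).differentiable (by simp)
  have h1 : T (fun y => f y * u y) = fun y => f y * w y + (c * Dop j f y) * u y := by
    funext y
    rw [hT, aux_Dop_mul j f u y (hfd y) (u.differentiable y), hw]
    ring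
  rw [h1, hT, hT]
  have h2 : Dop j (fun y => f y * w y + (c * Dop j f y) * u y) x
      = Dop j (fun y => f y * w y) x + c * Dop j (fun y => Dop j f y * u y) x := by
    simp only [Dop, pdC]
    have hh : (fun y => f y * w y + (c * (-I * (fderiv ℝ f y) (EuclideanSpace.single j 1))) * u y)
       = fun y => f y * w y + c * (Dop j f y * u y) := by
      funext y; simp only [Dop, pdC]; ring
    have d1 : DifferentiableAt ℝ (fun y => f y * w y) x := (hfd x).mul (w.differentiable x)
    have d2 : DifferentiableAt ℝ (fun y => Dop j f y * u y) x := (hDd x).mul (u.differentiable x)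
    rw [hh, fderiv_fun_add d1 (d2.const_mul _), fderiv_const_mul d2]
    simp [Dop, pdC]
    ring
  rw [h2, aux_Dop_mul j f w x (hfd x) (w.differentiable x),
    aux_Dop_mul j (Dop j f) u x (hDd x) (u.differentiable x), hw]
  ring

lemma aux_grad (φ : R2 → ℝ) (hφ_smooth : ContDiff ℝ (⊤ : ℕ∞) φ)
    (hφ_bd : ∀ n : ℕ, 2 ≤ n → ∃ C : ℝ, ∀ x : R2, ‖iteratedFDeriv ℝ n φ x‖ ≤ C) :
    (fderiv ℝ φ).HasTemperateGrowth := by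
  have hs : ContDiff ℝ (⊤ : ℕ∞) (fderiv ℝ φ) := hφ_smooth.fderiv_right (by simp)
  refine ⟨hs, fun n => ?_⟩
  rcases n with _ | n
  · obtain ⟨C, hC⟩ := hφ_bd 2 le_rfl
    have hb : ∀ x, ‖fderiv ℝ (fderiv ℝ φ) x‖ ≤ C := by
      intro x
      rw [← norm_iteratedFDeriv_one, norm_iteratedFDeriv_fderiv]
      exact hC x
    have h0 : 0 ≤ C := (norm_nonneg _).trans (hC 0)
    refine ⟨1, ‖fderiv ℝ φ 0‖ + C, fun x => ?_⟩
    have := Convex.norm_image_sub_le_of_norm_fderiv_le (f := fderiv ℝ φ) (𝕜 := ℝ) (s := Set.univ)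
      (fun x _ => hs.differentiable (by simp) x) (fun x _ => hb x) convex_univ
      (Set.mem_univ 0) (Set.mem_univ x)
    have h3 := norm_le_norm_add_norm_sub (fderiv ℝ φ 0) (fderiv ℝ φ x)
    rw [norm_sub_rev] at h3
    simp only [norm_iteratedFDeriv_zero, pow_one, sub_zero] at *
    nlinarith [norm_nonneg x, norm_nonneg (fderiv ℝ φ 0), mul_nonneg (norm_nonneg x) (norm_nonneg (fderiv ℝ φ 0))]
  · obtain ⟨C, hC⟩ := hφ_bd (n + 1 + 1) (by omega)
    refine ⟨0, C, fun x => ?_⟩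
    rw [norm_iteratedFDeriv_fderiv]
    simpa using hC x

lemma aux_pd_tg (φ : R2 → ℝ) (hg : (fderiv ℝ φ).HasTemperateGrowth) (j : Fin 2) :
    (pdR j φ).HasTemperateGrowth := by
  have := (ContinuousLinearMap.apply ℝ ℝ (EuclideanSpace.single j (1:ℝ) : R2)).hasTemperateGrowth.comp hg
  exact this

lemma aux_pd_phih (f : R2 → ℝ) (s : ℝ) (j : Fin 2) (hf : Differentiable ℝ f) (x : R2) :
    pdR j (fun y => f (s • y)) x = s * pdR j f (s • x) := by
  simp only [pdR]
  rw [fderiv_comp_smul]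
  simp

lemma aux_pdpd_phih (φ : R2 → ℝ) (h : ℝ) (hs : ContDiff ℝ (⊤ : ℕ∞) φ) (j : Fin 2) (x : R2) :
    pdR j (pdR j (phih φ h)) x = (h ^ (-(1/2 : ℝ)) : ℝ) ^ 2 * pdR j (pdR j φ) ((h ^ (-(1/2 : ℝ)) : ℝ) • x) := by
  set s := (h ^ (-(1/2 : ℝ)) : ℝ)
  have h1 : pdR j (phih φ h) = fun y => s * pdR j φ (s • y) := by
    funext y
    exact aux_pd_phih φ s j (hs.differentiable (by simp)) y
  have hd : Differentiable ℝ (pdR j φ) := by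
    have : ContDiff ℝ (⊤ : ℕ∞) (fderiv ℝ φ) := hs.fderiv_right (by simp)
    have := this.differentiable (by simp)
    unfold pdR
    fun_prop
  have h2 := aux_pd_phih (pdR j φ) s j hd x
  rw [h1]
  have : pdR j (fun y => s * pdR j φ (s • y)) x = s * pdR j (fun y => pdR j φ (s • y)) x := by
    have hd2 : Differentiable ℝ (fun y => pdR j φ (s • y)) := by fun_prop
    conv_lhs => rw [pdR]
    rw [fderiv_const_mul (hd2 x)]
    rfl
  rw [this, h2]
  ring

lemma aux_pdpd_bd (φ : R2 → ℝ) (hs : ContDiff ℝ (⊤ : ℕ∞) φ) (C : ℝ)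
    (hC : ∀ x : R2, ‖iteratedFDeriv ℝ 2 φ x‖ ≤ C) (j : Fin 2) (x : R2) :
    |pdR j (pdR j φ) x| ≤ C := by
  have hd : Differentiable ℝ (fderiv ℝ φ) :=
    (hs.fderiv_right (m := (⊤ : ℕ∞)) (by simp)).differentiable (by simp)
  have hb : ‖fderiv ℝ (fderiv ℝ φ) x‖ ≤ C := by
    rw [← norm_iteratedFDeriv_one, norm_iteratedFDeriv_fderiv]
    exact hC x
  have : pdR j (pdR j φ) x = fderiv ℝ (fderiv ℝ φ) x (EuclideanSpace.single j 1) (EuclideanSpace.single j 1) := by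
    unfold pdR
    rw [fderiv_clm_apply (hd x) (by fun_prop)]
    simp
  rw [this, ← Real.norm_eq_abs]
  refine (ContinuousLinearMap.le_opNorm₂ _ _ _).trans ?_
  simpa using hb

lemma aux_eLp (u w : SchwartzMap R2 ℂ) (K : ℝ) (hK : 0 ≤ K)
    (h : ∫ x, ‖w x‖ ^ 2 ≤ K ^ 2 * ∫ x, ‖u x‖ ^ 2) :
    eLpNorm w 2 volume ≤ ENNReal.ofReal K * eLpNorm u 2 volume := by
  rw [(w.memLp 2 volume).eLpNorm_eq_integral_rpow_norm (by simp) (by simp),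
    (u.memLp 2 volume).eLpNorm_eq_integral_rpow_norm (by simp) (by simp), ← ENNReal.ofReal_mul hK]
  apply ENNReal.ofReal_le_ofReal
  simp only [ENNReal.toReal_ofNat, Real.rpow_two, ← one_div, ← Real.sqrt_eq_rpow]
  rw [← Real.sqrt_sq hK, ← Real.sqrt_mul (sq_nonneg K)]
  exact Real.sqrt_le_sqrt h

lemma aux_bdd (f : R2 → ℂ) (hf : ContDiff ℝ (⊤ : ℕ∞) f) (hc : HasCompactSupport f) :
    ∃ M, 0 ≤ M ∧ ∀ x, ‖f x‖ ≤ M := by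
  obtain ⟨M, hM⟩ := hf.continuous.bounded_above_of_compact_support hc
  exact ⟨M, (norm_nonneg _).trans (hM 0), hM⟩

/-- For a cutoff `β ∈ C_c^∞` and solutions of `P u = 0`,
`sup_q ‖P(β_q u)‖_{L²} ≤ C h ‖u‖_{L²}`. -/
theorem stmt6 (φ : R2 → ℝ) (hφ_smooth : ContDiff ℝ (⊤ : ℕ∞) φ)
    (hφ_bd : ∀ n : ℕ, 2 ≤ n → ∃ C : ℝ, ∀ x : R2, ‖iteratedFDeriv ℝ n φ x‖ ≤ C)
    (β : R2 → ℝ) (hβ_smooth : ContDiff ℝ (⊤ : ℕ∞) β) (hβ_supp : HasCompactSupport β) :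
    ∃ C > 0, ∀ h ∈ Set.Ioc (0 : ℝ) 1, ∀ u : SchwartzMap R2 ℂ,
      (∀ x : R2, opPh φ h (⇑u) x = 0) →
      ∀ q : R2,
        eLpNorm (opPh φ h (fun x => ((β (x - q) : ℝ) : ℂ) * u x)) 2 volume ≤
          ENNReal.ofReal (C * h) * eLpNorm (⇑u) 2 volume := by
  obtain ⟨C₂, hC₂⟩ := hφ_bd 2 le_rfl
  have hC₂0 : 0 ≤ C₂ := (norm_nonneg _).trans (hC₂ 0)
  have hg := aux_grad φ hφ_smooth hφ_bd
  set b : R2 → ℂ := fun x => (β x : ℂ) with hb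
  have hbs : ContDiff ℝ (⊤ : ℕ∞) b := Complex.ofRealCLM.contDiff.comp hβ_smooth
  have hbc : HasCompactSupport b := hβ_supp.comp_left (g := fun r : ℝ => (r : ℂ)) (by simp)
  have hM : ∀ j, ∃ M, 0 ≤ M ∧ ∀ x, ‖Dop j b x‖ ≤ M := fun j =>
    aux_bdd _ (aux_Dop_smooth j b hbs) (aux_Dop_supp j b hbc)
  have hN : ∀ j, ∃ M, 0 ≤ M ∧ ∀ x, ‖Dop j (Dop j b) x‖ ≤ M := fun j =>
    aux_bdd _ (aux_Dop_smooth j _ (aux_Dop_smooth j b hbs))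
      (aux_Dop_supp j _ (aux_Dop_supp j b hbc))
  choose M hM0 hM using hM
  choose N hN0 hN using hN
  obtain ⟨K, hKdef⟩ : ∃ K : ℝ, K = 1 + C₂ := ⟨_, rfl⟩
  have hK0 : 0 ≤ K := by rw [hKdef]; positivity
  refine ⟨M 0 * K + M 1 * K + (N 0 + N 1) + 1, by have := hM0 0; have := hM0 1; have := hN0 0; have := hN0 1; positivity, ?_⟩
  intro h ⟨hh0, hh1⟩ u hu q
  set s := (h ^ (-(1/2 : ℝ)) : ℝ) with hs
  have hs2 : s ^ 2 = h⁻¹ := by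
    rw [hs, ← Real.rpow_natCast, ← Real.rpow_mul hh0.le]
    norm_num [Real.rpow_neg_one]
  have hpd : ∀ j, (pdR j (phih φ h)).HasTemperateGrowth := by
    intro j
    have h1 : pdR j (phih φ h) = fun y => s * pdR j φ (s • y) := by
      funext y
      exact aux_pd_phih φ s j (hφ_smooth.differentiable (by simp)) y
    rw [h1]
    have h2 : (fun y : R2 => s • y).HasTemperateGrowth :=
      (s • ContinuousLinearMap.id ℝ R2).hasTemperateGrowth
    exact (Function.HasTemperateGrowth.const s).mul ((aux_pd_tg φ hg j).comp h2)
  set VA : R2 → ℝ := fun x => h / 2 * pdR 1 (phih φ h) x with hVA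
  set VB : R2 → ℝ := fun x => -(h / 2) * pdR 0 (phih φ h) x with hVB
  have tA : VA.HasTemperateGrowth := (Function.HasTemperateGrowth.const _).mul (hpd 1)
  have tB : VB.HasTemperateGrowth := (Function.HasTemperateGrowth.const _).mul (hpd 0)
  have hTA : ∀ v x, opAh φ h v x = ((h / 2 : ℝ) : ℂ) * Dop 0 v x - ((VA x : ℝ) : ℂ) * v x :=
    fun v x => rfl
  have hTB : ∀ v x, opBh φ h v x = ((h / 2 : ℝ) : ℂ) * Dop 1 v x - ((VB x : ℝ) : ℂ) * v x := by
    intro v x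
    simp only [opBh, hVB]
    push_cast
    ring
  obtain ⟨wA, hwA⟩ := aux_T_schwartz (h / 2) VA tA 0 u
  obtain ⟨zA, hzA⟩ := aux_T_schwartz (h / 2) VA tA 0 wA
  obtain ⟨wB, hwB⟩ := aux_T_schwartz (h / 2) VB tB 1 u
  obtain ⟨zB, hzB⟩ := aux_T_schwartz (h / 2) VB tB 1 wB
  have eA := aux_energy (h / 2) VA tA 0 u wA zA hwA hzA
  have eB := aux_energy (h / 2) VB tB 1 u wB zB hwB hzB
  have fA : opAh φ h u = wA := by funext x; rw [hTA, hwA]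
  have fB : opBh φ h u = wB := by funext x; rw [hTB, hwB]
  have hPu : ∀ x, zA x + zB x - ((h ^ 2 / 4 * lapR (phih φ h) x : ℝ) : ℂ) * u x - u x = 0 := by
    intro x
    have := hu x
    rw [opPh, fA, fB, hTA, hTB, ← hzA, ← hzB] at this
    exact this
  have hlap : ∀ x, h ^ 2 / 4 * lapR (phih φ h) x ≤ C₂ := by
    intro x
    rw [lapR, aux_pdpd_phih φ h hφ_smooth, aux_pdpd_phih φ h hφ_smooth, ← hs, hs2]
    have a0 := (abs_le.1 (aux_pdpd_bd φ hφ_smooth C₂ hC₂ 0 (s • x))).2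
    have a1 := (abs_le.1 (aux_pdpd_bd φ hφ_smooth C₂ hC₂ 1 (s • x))).2
    have : h ^ 2 / 4 * (h⁻¹ * pdR 0 (pdR 0 φ) (s • x) + h⁻¹ * pdR 1 (pdR 1 φ) (s • x))
      = h / 4 * (pdR 0 (pdR 0 φ) (s • x) + pdR 1 (pdR 1 φ) (s • x)) := by
      field_simp
    rw [this]
    calc _ ≤ h / 4 * (C₂ + C₂) := by gcongr
      _ ≤ C₂ := by nlinarith
  have hint : ∀ f g : SchwartzMap R2 ℂ, Integrable (fun x => inner ℝ (f x) (g x)) := by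
    intro f g
    exact (SchwartzMap.bilinLeftCLM (innerSL ℝ) g.hasTemperateGrowth f).integrable.congr
      (Filter.Eventually.of_forall fun x => by
        rw [SchwartzMap.bilinLeftCLM_apply _ g.hasTemperateGrowth]; rfl)
  have hsum : (∫ x, ‖wA x‖ ^ 2) + ∫ x, ‖wB x‖ ^ 2 ≤ K ^ 2 * ∫ x, ‖u x‖ ^ 2 := by
    rw [← eA, ← eB, ← integral_add (hint _ _) (hint _ _), ← integral_const_mul]
    refine integral_mono ((hint _ _).add (hint _ _)) ?_ ?_
    · refine Integrable.const_mul ?_ _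
      simpa only [real_inner_self_eq_norm_sq] using hint u u
    · intro x
      have e1 : zA x + zB x = (h ^ 2 / 4 * lapR (phih φ h) x + 1) • u x := by
        rw [Complex.real_smul]
        push_cast
        have := hPu x
        push_cast at this
        linear_combination this
      show inner ℝ (u x) (zA x) + inner ℝ (u x) (zB x) ≤ K ^ 2 * ‖u x‖ ^ 2
      rw [← inner_add_right, e1, real_inner_smul_right, real_inner_self_eq_norm_sq]
      gcongr
      have := hlap x
      nlinarith
  have nA : 0 ≤ ∫ x, ‖wA x‖ ^ 2 := integral_nonneg fun x => by positivity
  have nB : 0 ≤ ∫ x, ‖wB x‖ ^ 2 := integral_nonneg fun x => by positivity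
  have LA := aux_eLp u wA K hK0 (by linarith)
  have LB := aux_eLp u wB K hK0 (by linarith)
  set f : R2 → ℂ := fun y => b (y - q) with hf
  have hfs : ContDiff ℝ (⊤ : ℕ∞) f := hbs.comp (contDiff_id.sub contDiff_const)
  have dA := aux_comm (h / 2) VA 0 f hfs u wA hwA (opAh φ h) hTA
  have dB := aux_comm (h / 2) VB 1 f hfs u wB hwB (opBh φ h) hTB
  have D1 : ∀ j x, ‖Dop j f x‖ ≤ M j := by
    intro j x
    rw [hf, aux_Dop_shift]
    exact hM j _
  have D2 : ∀ j x, ‖Dop j (Dop j f) x‖ ≤ N j := by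
    intro j x
    rw [hf, aux_Dop_shift, aux_Dop_shift]
    exact hN j _
  have hform : ∀ x, opPh φ h (fun x => f x * u x) x = h * Dop 0 f x * wA x + h * Dop 1 f x * wB x
      + (h / 2) ^ 2 * (Dop 0 (Dop 0 f) x + Dop 1 (Dop 1 f) x) * u x := by
    intro x
    rw [opPh, dA, dB, hTA, hTB, ← hzA, ← hzB]
    have := hPu x
    push_cast at this ⊢
    linear_combination f x * this
  have hpt : ∀ x, ‖opPh φ h (fun x => f x * u x) x‖ ≤
      ‖((h * M 0) * ‖wA x‖ + (h * M 1) * ‖wB x‖ + (h * (N 0 + N 1)) * ‖u x‖ : ℝ)‖ := by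
    intro x
    have := hM0 0
    have := hM0 1
    have := hN0 0
    have := hN0 1
    rw [hform, Real.norm_of_nonneg (by positivity)]
    refine (norm_add₃_le).trans ?_
    simp only [norm_mul, norm_pow, norm_div, Complex.norm_real, Real.norm_of_nonneg hh0.le, Complex.norm_ofNat]
    gcongr
    · exact D1 0 x
    · exact D1 1 x
    · nlinarith
    · exact (norm_add_le _ _).trans (add_le_add (D2 0 x) (D2 1 x))
  have hfin : ∀ (c : ℝ) (g : SchwartzMap R2 ℂ), 0 ≤ c → eLpNorm (fun x => c * ‖g x‖) 2 volume
      = ENNReal.ofReal c * eLpNorm g 2 volume := by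
    intro c g hc
    have := eLpNorm_const_smul c (fun x => ‖g x‖) 2 (volume : Measure R2)
    rw [eLpNorm_norm] at this
    rw [← ofReal_norm, Real.norm_of_nonneg hc] at this
    exact this
  have mes : ∀ (c : ℝ) (g : SchwartzMap R2 ℂ), AEStronglyMeasurable (fun x => c * ‖g x‖) volume :=
    fun c g => (continuous_const.mul g.continuous.norm).aestronglyMeasurable
  have m0 := hM0 0
  have m1 := hM0 1
  have n0 := hN0 0
  have n1 := hN0 1
  calc eLpNorm (opPh φ h (fun x => f x * u x)) 2 volume
      ≤ eLpNorm (fun x => ((h * M 0) * ‖wA x‖ + (h * M 1) * ‖wB x‖ + (h * (N 0 + N 1)) * ‖u x‖ : ℝ)) 2 volume :=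
        eLpNorm_mono hpt
    _ ≤ eLpNorm (fun x => (h * M 0) * ‖wA x‖) 2 volume + eLpNorm (fun x => (h * M 1) * ‖wB x‖) 2 volume
        + eLpNorm (fun x => (h * (N 0 + N 1)) * ‖u x‖) 2 volume := by
        refine (eLpNorm_add_le ((mes _ _).add (mes _ _)) (mes _ _) (by norm_num)).trans ?_
        gcongr
        exact eLpNorm_add_le (mes _ _) (mes _ _) (by norm_num)
    _ ≤ ENNReal.ofReal (h * M 0) * (ENNReal.ofReal K * eLpNorm u 2 volume)
        + ENNReal.ofReal (h * M 1) * (ENNReal.ofReal K * eLpNorm u 2 volume)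
        + ENNReal.ofReal (h * (N 0 + N 1)) * eLpNorm u 2 volume := by
        rw [hfin _ _ (by positivity), hfin _ _ (by positivity), hfin _ _ (by positivity)]
        gcongr
    _ = ENNReal.ofReal (h * M 0 * K + h * M 1 * K + h * (N 0 + N 1)) * eLpNorm u 2 volume := by
        rw [ENNReal.ofReal_add (by positivity) (by positivity),
          ENNReal.ofReal_add (by positivity) (by positivity),
          ENNReal.ofReal_mul (by positivity : 0 ≤ h * M 0),
          ENNReal.ofReal_mul (by positivity : 0 ≤ h * M 1)]
        ring
    _ ≤ _ := by
        gcongr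
        nlinarith
end
end

section
/- For every λ ≥ 0 and every Schwartz function u : ℝ² → ℂ satisfying Pu = 0, one has ‖Au‖_{L²(ℝ²)} ≤ (‖Δφ‖_{L^∞(ℝ²)}/4 + λ²)^{1/2} ‖u‖_{L²(ℝ²)} and ‖Bu‖_{L²(ℝ²)} ≤ (‖Δφ‖_{L^∞(ℝ²)}/4 + λ²)^{1/2} ‖u‖_{L²(ℝ²)}. -/
noncomputable section

open MeasureTheory Complex

/-- `A u = (D₁/2 - (∂₂ φ)/2) u`. -/
def opA (φ : R2 → ℝ) (u : R2 → ℂ) (x : R2) : ℂ :=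
  Dop 0 u x / 2 - ((pdR 1 φ x / 2 : ℝ) : ℂ) * u x

/-- `B u = (D₂/2 + (∂₁ φ)/2) u`. -/
def opB (φ : R2 → ℝ) (u : R2 → ℂ) (x : R2) : ℂ :=
  Dop 1 u x / 2 + ((pdR 0 φ x / 2 : ℝ) : ℂ) * u x

/-- `P u = A²u + B²u - (Δφ/4) u - λ² u`. -/
def opP (φ : R2 → ℝ) (l : ℝ) (u : R2 → ℂ) (x : R2) : ℂ :=
  opA φ (opA φ u) x + opB φ (opB φ u) x - ((lapR φ x / 4 : ℝ) : ℂ) * u x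
    - ((l : ℂ)) ^ 2 * u x

/-- First-order operator `-i/2 ∂_j + ψ` is symmetric on Schwartz functions. -/
theorem symm_aux (j : Fin 2) (ψ : R2 → ℝ) (hψ : Function.HasTemperateGrowth ψ)
    (u : SchwartzMap R2 ℂ) :
    ∃ a b : SchwartzMap R2 ℂ, (∀ x, a x = Dop j (⇑u) x / 2 + (ψ x : ℂ) * u x) ∧
      (∀ x, b x = Dop j (⇑a) x / 2 + (ψ x : ℂ) * a x) ∧
      ∫ x, inner ℝ (u x) (b x) = ∫ x, ‖a x‖ ^ 2 := by
  let v : R2 := EuclideanSpace.single j 1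
  let T : SchwartzMap R2 ℂ → SchwartzMap R2 ℂ := fun f =>
    (-Complex.I / 2) • LineDeriv.lineDerivOp v f + SchwartzMap.smulLeftCLM ℂ ψ f
  have hT : ∀ f x, T f x = Dop j (⇑f) x / 2 + (ψ x : ℂ) * f x := by
    intro f x
    simp only [T, add_apply, smul_apply,
      SchwartzMap.lineDerivOp_apply_eq_fderiv,
      SchwartzMap.smulLeftCLM_apply_apply hψ, Dop, pdC, v]
    simp
    ring
  refine ⟨T u, T (T u), hT u, hT (T u), ?_⟩
  set a := T u with ha
  have key := SchwartzMap.integral_bilinear_lineDerivOp_right_eq_neg_left (μ := volume)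
    u ((-Complex.I / 2) • a) (innerSL ℝ) v
  have key' : ∫ x, inner ℝ (u x) ((-Complex.I / 2) * (LineDeriv.lineDerivOp v a) x)
      = - ∫ x, inner ℝ ((LineDeriv.lineDerivOp v u) x) ((-Complex.I / 2) * a x) := by
    rw [LineDeriv.lineDerivOp_smul] at key
    exact key
  have i1 : ∀ f g : SchwartzMap R2 ℂ, Integrable (fun x => (inner ℝ (f x) (g x) : ℝ)) := fun f g =>
    (SchwartzMap.pairing (innerSL ℝ) f g).integrable
  have e1 : ∀ x, (inner ℝ (u x) (T a x) : ℝ) =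
      inner ℝ (u x) ((-Complex.I / 2) * (LineDeriv.lineDerivOp v a) x)
       + inner ℝ (u x) (SchwartzMap.smulLeftCLM ℂ ψ a x) := by
    intro x
    rw [← inner_add_right]; rfl
  have e2 : ∀ x, ‖a x‖ ^ 2 = - (inner ℝ ((LineDeriv.lineDerivOp v u) x) ((-Complex.I / 2) * a x) : ℝ)
       + inner ℝ (u x) (SchwartzMap.smulLeftCLM ℂ ψ a x) := by
    intro x
    rw [← real_inner_self_eq_norm_sq]
    have : a x = (-Complex.I / 2) * (LineDeriv.lineDerivOp v u) x + (ψ x : ℂ) * u x := by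
      have := hT u x
      rw [← ha] at this
      rw [this, SchwartzMap.lineDerivOp_apply_eq_fderiv, Dop, pdC]; ring
    conv_lhs => arg 2; rw [this]
    rw [SchwartzMap.smulLeftCLM_apply_apply hψ]
    generalize (LineDeriv.lineDerivOp v u) x = p
    generalize a x = q
    simp only [Complex.inner, Complex.mul_re, Complex.conj_re, Complex.conj_im]
    simp
    ring
  simp_rw [e1, e2]
  rw [integral_add, integral_add, key', integral_neg]
  · exact (i1 (LineDeriv.lineDerivOp v u) ((-Complex.I / 2) • a)).neg
  · exact i1 u _
  · exact i1 u ((-Complex.I / 2) • (LineDeriv.lineDerivOp v a))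
  · exact i1 u _

theorem tg_fderiv (φ : R2 → ℝ) (hφ_smooth : ContDiff ℝ (⊤ : ℕ∞) φ)
    (hφ_bd : ∀ n : ℕ, 2 ≤ n → ∃ C : ℝ, ∀ x : R2, ‖iteratedFDeriv ℝ n φ x‖ ≤ C) :
    Function.HasTemperateGrowth (fderiv ℝ φ) := by
  have h1 : ContDiff ℝ (⊤ : ℕ∞) (fderiv ℝ φ) := hφ_smooth.fderiv_right (by simp)
  refine ⟨h1, fun n => ?_⟩
  rcases n with _ | n
  · obtain ⟨C, hC⟩ := hφ_bd 2 le_rfl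
    have hb : ∀ x, ‖fderiv ℝ (fderiv ℝ φ) x‖ ≤ C := by
      intro x
      rw [← norm_iteratedFDeriv_one, norm_iteratedFDeriv_fderiv]
      exact hC x
    have hC0 : 0 ≤ C := (norm_nonneg (iteratedFDeriv ℝ 2 φ 0)).trans (hC 0)
    refine ⟨1, ‖fderiv ℝ φ 0‖ + C, fun x => ?_⟩
    have hm := convex_univ.norm_image_sub_le_of_norm_fderiv_le (𝕜 := ℝ) (f := fderiv ℝ φ)
      (fun y _ => (h1.differentiable (by simp)) y) (fun y _ => hb y)
      (Set.mem_univ 0) (Set.mem_univ x)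
    rw [norm_iteratedFDeriv_zero]
    rw [sub_zero] at hm
    have h3 : ‖fderiv ℝ φ x‖ ≤ ‖fderiv ℝ φ 0‖ + ‖fderiv ℝ φ x - fderiv ℝ φ 0‖ := by
      simpa using norm_add_le (fderiv ℝ φ 0) (fderiv ℝ φ x - fderiv ℝ φ 0)
    nlinarith [norm_nonneg x, norm_nonneg (fderiv ℝ φ 0)]
  · obtain ⟨C, hC⟩ := hφ_bd (n + 2) (by omega)
    refine ⟨0, C, fun x => ?_⟩
    rw [norm_iteratedFDeriv_fderiv]
    simpa using hC x

theorem lap_bd (φ : R2 → ℝ) (hφ_smooth : ContDiff ℝ (⊤ : ℕ∞) φ)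
    (hφ_bd : ∀ n : ℕ, 2 ≤ n → ∃ C : ℝ, ∀ x : R2, ‖iteratedFDeriv ℝ n φ x‖ ≤ C) :
    BddAbove (Set.range fun x : R2 => |lapR φ x|) := by
  have h1 : ContDiff ℝ (⊤ : ℕ∞) (fderiv ℝ φ) := hφ_smooth.fderiv_right (by simp)
  obtain ⟨C, hC⟩ := hφ_bd 2 le_rfl
  have hb : ∀ x, ‖fderiv ℝ (fderiv ℝ φ) x‖ ≤ C := by
    intro x
    rw [← norm_iteratedFDeriv_one, norm_iteratedFDeriv_fderiv]
    exact hC x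
  have hj : ∀ j x, |pdR j (pdR j φ) x| ≤ C := by
    intro j x
    have hd : DifferentiableAt ℝ (fderiv ℝ φ) x := (h1.differentiable (by simp)) x
    have : pdR j (pdR j φ) x = fderiv ℝ (fderiv ℝ φ) x (EuclideanSpace.single j 1)
        (EuclideanSpace.single j 1) := by
      unfold pdR
      rw [fderiv_clm_apply hd (by fun_prop)]
      simp
    rw [this, ← Real.norm_eq_abs]
    refine (ContinuousLinearMap.le_opNorm₂ _ _ _).trans ?_
    simpa using hb x
  refine ⟨C + C, ?_⟩
  rintro _ ⟨x, rfl⟩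
  exact (abs_add_le _ _).trans (add_le_add (hj 0 x) (hj 1 x))

theorem eLp_aux (a u : SchwartzMap R2 ℂ) (K : ℝ) (hK : 0 ≤ K)
    (h : ∫ x, ‖a x‖ ^ 2 ≤ K * ∫ x, ‖u x‖ ^ 2) :
    eLpNorm (⇑a) 2 volume ≤ ENNReal.ofReal (Real.sqrt K) * eLpNorm (⇑u) 2 volume := by
  have e : ∀ f : SchwartzMap R2 ℂ, eLpNorm (⇑f) 2 volume
      = ENNReal.ofReal (Real.sqrt (∫ x, ‖f x‖ ^ 2)) := by
    intro f
    rw [(f.memLp 2 volume).eLpNorm_eq_integral_rpow_norm (by simp) (by simp), Real.sqrt_eq_rpow]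
    simp
  rw [e, e, ← ENNReal.ofReal_mul (Real.sqrt_nonneg _), ← Real.sqrt_mul hK]
  exact ENNReal.ofReal_le_ofReal (Real.sqrt_le_sqrt h)

/-- For solutions of `P u = 0`, `‖Au‖_{L²}` and `‖Bu‖_{L²}` are bounded by
`(‖Δφ‖_∞/4 + λ²)^{1/2} ‖u‖_{L²}`. -/
theorem stmt12 (φ : R2 → ℝ) (hφ_smooth : ContDiff ℝ (⊤ : ℕ∞) φ)
    (hφ_bd : ∀ n : ℕ, 2 ≤ n → ∃ C : ℝ, ∀ x : R2, ‖iteratedFDeriv ℝ n φ x‖ ≤ C) :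
    ∀ l : ℝ, 0 ≤ l → ∀ u : SchwartzMap R2 ℂ,
      (∀ x : R2, opP φ l (⇑u) x = 0) →
      eLpNorm (opA φ (⇑u)) 2 volume ≤
          ENNReal.ofReal (Real.sqrt ((⨆ x : R2, |lapR φ x|) / 4 + l ^ 2)) *
            eLpNorm (⇑u) 2 volume ∧
      eLpNorm (opB φ (⇑u)) 2 volume ≤
          ENNReal.ofReal (Real.sqrt ((⨆ x : R2, |lapR φ x|) / 4 + l ^ 2)) *
            eLpNorm (⇑u) 2 volume := by
  intro l hl u hP
  have hg := tg_fderiv φ hφ_smooth hφ_bd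
  have hpd : ∀ j, Function.HasTemperateGrowth (pdR j φ) := fun j =>
    (ContinuousLinearMap.apply ℝ ℝ (EuclideanSpace.single j (1 : ℝ) : R2)).hasTemperateGrowth.comp hg
  have h0 : Function.HasTemperateGrowth (fun x => -(1 / 2) * pdR 1 φ x) :=
    (Function.HasTemperateGrowth.const (-(1 / 2) : ℝ)).mul (hpd 1)
  have h1 : Function.HasTemperateGrowth (fun x => (1 / 2) * pdR 0 φ x) :=
    (Function.HasTemperateGrowth.const ((1 / 2) : ℝ)).mul (hpd 0)
  obtain ⟨a, a', ha, ha', hA⟩ := symm_aux 0 _ h0 u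
  obtain ⟨b, b', hb, hb', hB⟩ := symm_aux 1 _ h1 u
  have eA : ∀ f : R2 → ℂ, ∀ x, opA φ f x
      = Dop 0 f x / 2 + ((-(1 / 2) * pdR 1 φ x : ℝ) : ℂ) * f x := by
    intro f x; simp only [opA]; push_cast; ring
  have eB : ∀ f : R2 → ℂ, ∀ x, opB φ f x
      = Dop 1 f x / 2 + (((1 / 2) * pdR 0 φ x : ℝ) : ℂ) * f x := by
    intro f x; simp only [opB]; push_cast; ring
  have fa : opA φ (⇑u) = ⇑a := by funext x; rw [eA, ha]
  have fb : opB φ (⇑u) = ⇑b := by funext x; rw [eB, hb]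
  have fa' : opA φ (⇑a) = ⇑a' := by funext x; rw [eA, ha']
  have fb' : opB φ (⇑b) = ⇑b' := by funext x; rw [eB, hb']
  set K := (⨆ x : R2, |lapR φ x|) / 4 + l ^ 2 with hKdef
  have hM := lap_bd φ hφ_smooth hφ_bd
  have hK : 0 ≤ K := by
    have : 0 ≤ ⨆ x : R2, |lapR φ x| := Real.iSup_nonneg fun x => abs_nonneg _
    positivity
  have i1 : ∀ f g : SchwartzMap R2 ℂ, Integrable (fun x => (inner ℝ (f x) (g x) : ℝ)) := fun f g =>
    (SchwartzMap.pairing (innerSL ℝ) f g).integrable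
  have i2 : Integrable (fun x => ‖u x‖ ^ 2) := by
    simpa only [real_inner_self_eq_norm_sq] using i1 u u
  have hpt : ∀ x, (inner ℝ (u x) (a' x) : ℝ) + inner ℝ (u x) (b' x) ≤ K * ‖u x‖ ^ 2 := by
    intro x
    have hx := hP x
    unfold opP at hx
    rw [fa, fb, fa', fb'] at hx
    have hs : a' x + b' x = (lapR φ x / 4 + l ^ 2 : ℝ) • u x := by
      rw [Complex.real_smul]; push_cast at hx ⊢
      linear_combination hx
    rw [← inner_add_right, hs, real_inner_smul_right, real_inner_self_eq_norm_sq]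
    have hle : lapR φ x ≤ ⨆ x : R2, |lapR φ x| := (le_abs_self _).trans (le_ciSup hM x)
    gcongr
    rw [hKdef]
    gcongr
  have hsum : (∫ x, ‖a x‖ ^ 2) + ∫ x, ‖b x‖ ^ 2 ≤ K * ∫ x, ‖u x‖ ^ 2 := by
    rw [← hA, ← hB, ← integral_add (i1 u a') (i1 u b'), ← integral_const_mul]
    exact integral_mono ((i1 u a').add (i1 u b')) (i2.const_mul K) hpt
  have na : 0 ≤ ∫ x, ‖a x‖ ^ 2 := integral_nonneg fun x => by positivity
  have nb : 0 ≤ ∫ x, ‖b x‖ ^ 2 := integral_nonneg fun x => by positivity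
  rw [fa, fb]
  exact ⟨eLp_aux a u K hK (by linarith), eLp_aux b u K hK (by linarith)⟩
end
end

section
/- For every Λ > 0 there is a constant C > 0, depending only on φ, β and Λ, such that for every λ ∈ [0,Λ], every q ∈ ℝ², and every Schwartz function u : ℝ² → ℂ satisfying Pu = 0, the function w(x) := e^{iσ(x,∇φ(q))} β(x) u(x+q) satisfies ‖Aw‖_{L²(ℝ²)} ≤ C ‖u‖_{L²(ℝ²)} and ‖Bw‖_{L²(ℝ²)} ≤ C ‖u‖_{L²(ℝ²)}. -/
noncomputable section

open MeasureTheory Complex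

/-- The symplectic phase `σ(x, ∇φ(q)) = x₂ ∂₁φ(q) - x₁ ∂₂φ(q)`. -/
def sigmaPhase (φ : R2 → ℝ) (q x : R2) : ℝ := x 1 * pdR 0 φ q - x 0 * pdR 1 φ q

/-- The conjugated-and-translated localization `w(x) = e^{iσ(x,∇φ(q))} β(x) u(x+q)`. -/
def wFun (φ β : R2 → ℝ) (q : R2) (u : R2 → ℂ) (x : R2) : ℂ :=
  Complex.exp (Complex.I * ((sigmaPhase φ q x : ℝ) : ℂ)) * ((β x : ℝ) : ℂ) * u (x + q)

/-- Generic first order operator `-i ∂_j f / 2 + a f`. -/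
def opG (j : Fin 2) (a : R2 → ℝ) (f : R2 → ℂ) (x : R2) : ℂ :=
  Dop j f x / 2 + ((a x : ℝ) : ℂ) * f x

lemma opA_eq (φ : R2 → ℝ) (f : R2 → ℂ) :
    opA φ f = opG 0 (fun x => -(pdR 1 φ x / 2)) f := by
  funext x
  simp only [opA, opG]
  push_cast
  ring

lemma opB_eq (φ : R2 → ℝ) (f : R2 → ℂ) :
    opB φ f = opG 1 (fun x => pdR 0 φ x / 2) f := by
  funext x
  simp only [opB, opG]

open LineDeriv in
lemma opG_schwartz (j : Fin 2) (a : R2 → ℝ) (ha : a.HasTemperateGrowth) (f : SchwartzMap R2 ℂ) :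
    ∃ g : SchwartzMap R2 ℂ, ∀ x, g x = opG j a f x := by
  have ha' : (fun x => ((a x : ℝ) : ℂ)).HasTemperateGrowth :=
    (ContinuousLinearMap.hasTemperateGrowth Complex.ofRealCLM).comp ha
  refine ⟨(-Complex.I / 2) • (∂_{(EuclideanSpace.single j 1 : R2)} f)
    + SchwartzMap.smulLeftCLM ℂ (fun x => ((a x : ℝ) : ℂ)) f, fun x => ?_⟩
  simp only [SchwartzMap.add_apply, SchwartzMap.smul_apply,
    SchwartzMap.lineDerivOp_apply_eq_fderiv, SchwartzMap.smulLeftCLM_apply_apply ha', opG, Dop, pdC,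
    smul_eq_mul]
  ring

lemma schwartz_inner_integrable (f g : SchwartzMap R2 ℂ) :
    Integrable (fun x => inner ℝ (f x) (g x)) volume :=
  ((g.memLp 2 volume).norm.integrable_mul (f.memLp 2 volume).norm).mono'
    (f.continuous.inner g.continuous).aestronglyMeasurable
    (Filter.Eventually.of_forall fun x => by
      have := norm_inner_le_norm (𝕜 := ℝ) (f x) (g x)
      simpa [mul_comm] using! this)

open LineDeriv in
lemma opG_symm (j : Fin 2) (a : R2 → ℝ) (f g f' g' : SchwartzMap R2 ℂ)
    (hf : ∀ x, f' x = opG j a f x) (hg : ∀ x, g' x = opG j a g x) :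
    ∫ x, inner ℝ (f x) (g' x) = ∫ x, inner ℝ (f' x) (g x) := by
  have h := SchwartzMap.integral_bilinear_lineDerivOp_right_eq_neg_left (μ := volume) f ((-Complex.I / 2) • g)
    (innerSL ℝ : ℂ →L[ℝ] ℂ →L[ℝ] ℝ) (EuclideanSpace.single j 1 : R2)
  have i1 := schwartz_inner_integrable f g'
  have i2 := schwartz_inner_integrable f' g
  have i3 := schwartz_inner_integrable f (∂_{(EuclideanSpace.single j 1 : R2)} ((-Complex.I / 2) • g))
  have i4 := schwartz_inner_integrable (∂_{(EuclideanSpace.single j 1 : R2)} f) ((-Complex.I / 2) • g)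
  change ∫ x, inner ℝ (f x) ((∂_{(EuclideanSpace.single j 1 : R2)} ((-Complex.I / 2) • g)) x)
    = -∫ x, inner ℝ ((∂_{(EuclideanSpace.single j 1 : R2)} f) x) (((-Complex.I / 2) • g) x) at h
  rw [← sub_eq_zero, ← integral_sub i1 i2]
  rw [eq_neg_iff_add_eq_zero, ← integral_add i3 i4] at h
  rw [← h]
  congr 1
  funext x
  have e : (∂_{(EuclideanSpace.single j 1 : R2)} ((-Complex.I / 2) • g)) x
      = (-Complex.I / 2) * pdC j g x := by
    rw [LineDeriv.lineDerivOp_smul, SchwartzMap.smul_apply,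
      SchwartzMap.lineDerivOp_apply_eq_fderiv]
    rfl
  have e2 : (∂_{(EuclideanSpace.single j 1 : R2)} f) x = pdC j f x := by
    rw [SchwartzMap.lineDerivOp_apply_eq_fderiv]
    rfl
  rw [e, e2, hf, hg, SchwartzMap.smul_apply]
  simp only [opG, Dop, Complex.inner]
  simp [Complex.conj_ofNat]
  ring

lemma schwartz_eLp (f : SchwartzMap R2 ℂ) :
    eLpNorm f 2 volume = ENNReal.ofReal (Real.sqrt (∫ x, inner ℝ (f x) (f x))) := by
  rw [MemLp.eLpNorm_eq_integral_rpow_norm (by norm_num) (by norm_num) (f.memLp 2 volume)]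
  rw [Real.sqrt_eq_rpow]
  congr 2
  · congr 1
    funext x
    rw [real_inner_self_eq_norm_sq]
    simp
  · norm_num

lemma fder_lip (φ : R2 → ℝ) (hφ : ContDiff ℝ (⊤ : ℕ∞) φ) (C : ℝ)
    (hC : ∀ x, ‖iteratedFDeriv ℝ 2 φ x‖ ≤ C) :
    (∀ x, ‖fderiv ℝ (fderiv ℝ φ) x‖ ≤ C) ∧ Differentiable ℝ (fderiv ℝ φ) ∧
    (∀ x y, ‖fderiv ℝ φ x - fderiv ℝ φ y‖ ≤ C * ‖x - y‖) := by
  have h1 : ∀ x, ‖fderiv ℝ (fderiv ℝ φ) x‖ ≤ C := by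
    intro x
    rw [← norm_iteratedFDeriv_one, norm_iteratedFDeriv_fderiv]
    exact hC x
  have h2 : Differentiable ℝ (fderiv ℝ φ) :=
    (hφ.fderiv_right (m := 1) (by norm_cast)).differentiable (by norm_num)
  refine ⟨h1, h2, fun x y => ?_⟩
  exact Convex.norm_image_sub_le_of_norm_fderiv_le (s := Set.univ) (fun x _ => h2 x)
    (fun x _ => h1 x) convex_univ (Set.mem_univ y) (Set.mem_univ x)

lemma fder_temp (φ : R2 → ℝ) (hφ : ContDiff ℝ (⊤ : ℕ∞) φ)
    (hφ_bd : ∀ n : ℕ, 2 ≤ n → ∃ C : ℝ, ∀ x : R2, ‖iteratedFDeriv ℝ n φ x‖ ≤ C) :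
    (fderiv ℝ φ).HasTemperateGrowth := by
  refine ⟨hφ.fderiv_right (by norm_cast), fun n => ?_⟩
  rcases Nat.eq_zero_or_pos n with rfl | hn
  · obtain ⟨C, hC⟩ := hφ_bd 2 le_rfl
    obtain ⟨-, -, h⟩ := fder_lip φ hφ C hC
    refine ⟨1, ‖fderiv ℝ φ 0‖ + C, fun x => ?_⟩
    have hC0 : 0 ≤ C := (norm_nonneg _).trans (hC 0)
    have h1 := h x 0
    rw [sub_zero] at h1
    have h2 := norm_le_norm_add_norm_sub' (fderiv ℝ φ x) (fderiv ℝ φ 0)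
    rw [norm_iteratedFDeriv_zero]
    nlinarith [norm_nonneg x, norm_nonneg (fderiv ℝ φ 0),
      mul_nonneg (norm_nonneg x) (norm_nonneg (fderiv ℝ φ 0))]
  · obtain ⟨C, hC⟩ := hφ_bd (n+1) (by omega)
    refine ⟨0, C, fun x => ?_⟩
    rw [norm_iteratedFDeriv_fderiv]
    simpa using hC x

lemma pdR_temp (φ : R2 → ℝ) (h : (fderiv ℝ φ).HasTemperateGrowth) (j : Fin 2) (c : ℝ) :
    (fun x => c * pdR j φ x).HasTemperateGrowth := by
  have h2 := (ContinuousLinearMap.hasTemperateGrowth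
    (c • (ContinuousLinearMap.apply ℝ ℝ (EuclideanSpace.single j 1 : R2)))).comp h
  exact h2

lemma pdR_lip (φ : R2 → ℝ) (C : ℝ)
    (h : ∀ x y, ‖fderiv ℝ φ x - fderiv ℝ φ y‖ ≤ C * ‖x - y‖) (j : Fin 2) (x y : R2) :
    |pdR j φ x - pdR j φ y| ≤ C * ‖x - y‖ := by
  have h1 := (fderiv ℝ φ x - fderiv ℝ φ y).le_opNorm (EuclideanSpace.single j 1 : R2)
  simp only [ContinuousLinearMap.sub_apply, EuclideanSpace.norm_single, norm_one, mul_one] at h1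
  exact h1.trans (h x y)

lemma pdR2_bd (φ : R2 → ℝ) (C : ℝ) (hd : Differentiable ℝ (fderiv ℝ φ))
    (h : ∀ x, ‖fderiv ℝ (fderiv ℝ φ) x‖ ≤ C) (i j : Fin 2) (x : R2) :
    |pdR i (pdR j φ) x| ≤ C := by
  have e : pdR i (pdR j φ) x = fderiv ℝ (fderiv ℝ φ) x (EuclideanSpace.single i 1)
      (EuclideanSpace.single j 1) := by
    have h2 : HasFDerivAt (pdR j φ) ((fderiv ℝ (fderiv ℝ φ) x).flip (EuclideanSpace.single j 1)) x := by
      have := (hd x).hasFDerivAt.clm_apply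
        (hasFDerivAt_const (EuclideanSpace.single j 1 : R2) x)
      simpa using! this
    unfold pdR at h2 ⊢
    rw [h2.fderiv]
    rfl
  rw [e]
  have h3 := (fderiv ℝ (fderiv ℝ φ) x).le_opNorm₂ (EuclideanSpace.single i 1)
    (EuclideanSpace.single j 1)
  simp only [EuclideanSpace.norm_single, norm_one, mul_one] at h3
  exact h3.trans (h x)

lemma sigma_hasFDerivAt (φ : R2 → ℝ) (q x : R2) :
    HasFDerivAt (sigmaPhase φ q) (pdR 0 φ q • (EuclideanSpace.proj 1 : R2 →L[ℝ] ℝ)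
      - pdR 1 φ q • (EuclideanSpace.proj 0 : R2 →L[ℝ] ℝ)) x := by
  have h1 := ((EuclideanSpace.proj 1 : R2 →L[ℝ] ℝ).hasFDerivAt (x := x)).mul_const (pdR 0 φ q)
  have h2 := ((EuclideanSpace.proj 0 : R2 →L[ℝ] ℝ).hasFDerivAt (x := x)).mul_const (pdR 1 φ q)
  exact h1.sub h2

lemma pdC_w (φ β : R2 → ℝ) (hβ : Differentiable ℝ β) (q : R2) (u : SchwartzMap R2 ℂ) (j : Fin 2)
    (x : R2) :
    pdC j (wFun φ β q u) x = Complex.exp (Complex.I * ((sigmaPhase φ q x : ℝ) : ℂ)) *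
      (Complex.I * ((pdR j (sigmaPhase φ q) x : ℝ) : ℂ) * (β x : ℂ) * u (x + q)
        + ((pdR j β x : ℝ) : ℂ) * u (x + q) + (β x : ℂ) * pdC j u (x + q)) := by
  have hs := (sigma_hasFDerivAt φ q x).differentiableAt.hasFDerivAt
  have hs' := ((Complex.ofRealCLM.hasFDerivAt.comp x hs).const_mul Complex.I).cexp
  have hb := Complex.ofRealCLM.hasFDerivAt.comp x (hβ x).hasFDerivAt
  have hu : HasFDerivAt (fun x => u (x + q)) (fderiv ℝ u (x + q)) x :=
    (hasFDerivAt_comp_add_right q).2 (u.differentiable (x + q)).hasFDerivAt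
  have hw : HasFDerivAt (wFun φ β q u) _ x := (hs'.mul hb).mul hu
  unfold pdC
  rw [hw.fderiv]
  simp [pdR]
  ring

lemma w_bound (φ β : R2 → ℝ) (hβ : Differentiable ℝ β) (u : SchwartzMap R2 ℂ) (j : Fin 2)
    (a : R2 → ℝ) (q : R2) (haσ : ∀ x, pdR j (sigmaPhase φ q) x = 2 * a q)
    (K : ℝ) (hK0 : 0 ≤ K) (hK : ∀ x y, |a x - a y| ≤ K * ‖x - y‖)
    (hβ_range : ∀ x : R2, 0 ≤ β x ∧ β x ≤ 1) (hβ_zero : ∀ x : R2, 2 ≤ ‖x‖ → β x = 0)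
    (M : ℝ) (hM : ∀ x, |pdR j β x| ≤ M) (x : R2) :
    ‖opG j a (wFun φ β q u) x‖ ≤ ‖opG j a u (x + q)‖ + (4 * K + |a 0| + M) * ‖u (x + q)‖ := by
  have e : opG j a (wFun φ β q u) x = Complex.exp (Complex.I * ((sigmaPhase φ q x : ℝ) : ℂ)) *
      ((β x : ℂ) * opG j a u (x + q) +
        (((β x * ((a q - a (x + q)) + a x) : ℝ) : ℂ) - Complex.I * ((pdR j β x / 2 : ℝ) : ℂ))
          * u (x + q)) := by
    simp only [opG, Dop]
    rw [pdC_w φ β hβ, haσ]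
    simp only [wFun]
    push_cast
    linear_combination (- Complex.exp (Complex.I * ((sigmaPhase φ q x : ℝ) : ℂ)) * (a q : ℂ) * (β x : ℂ) * u (x + q)) * Complex.I_sq
  have hn : ‖Complex.exp (Complex.I * ((sigmaPhase φ q x : ℝ) : ℂ))‖ = 1 := by
    rw [mul_comm]
    exact Complex.norm_exp_ofReal_mul_I _
  obtain ⟨b0, b1⟩ := hβ_range x
  have hc : |β x * ((a q - a (x + q)) + a x)| ≤ 4 * K + |a 0| := by
    by_cases hx : 2 ≤ ‖x‖
    · rw [hβ_zero x hx]
      simp only [zero_mul, abs_zero]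
      positivity
    · push Not at hx
      have h1 := hK q (x + q)
      have h2 := hK x 0
      rw [show q - (x + q) = -x by abel, norm_neg] at h1
      rw [sub_zero] at h2
      have h3 : |a q - a (x + q) + a x| ≤ 4 * K + |a 0| := by
        have h4 := abs_add_le (a q - a (x + q)) (a x)
        have h5 : |a x| ≤ |a x - a 0| + |a 0| := by
          simpa using abs_add_le (a x - a 0) (a 0)
        nlinarith
      rw [abs_mul, abs_of_nonneg b0]
      nlinarith [abs_nonneg (a q - a (x + q) + a x)]
  rw [e, norm_mul, hn, one_mul]
  refine (norm_add_le _ _).trans (add_le_add ?_ ?_)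
  · rw [norm_mul, Complex.norm_real, Real.norm_eq_abs, abs_of_nonneg b0]
    exact mul_le_of_le_one_left (norm_nonneg _) b1
  · rw [norm_mul]
    refine mul_le_mul_of_nonneg_right ((norm_sub_le _ _).trans (add_le_add ?_ ?_)) (norm_nonneg _)
    · rw [Complex.norm_real]
      exact hc
    · rw [norm_mul, Complex.norm_I, one_mul, Complex.norm_real, Real.norm_eq_abs, abs_div]
      have := hM x
      have := abs_nonneg (pdR j β x)
      rw [abs_two]
      linarith

lemma w_eLp (v f g : R2 → ℂ) (hf : Continuous f) (hg : Continuous g) (N : ℝ) (hN : 0 ≤ N) (q : R2)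
    (h : ∀ x, ‖v x‖ ≤ ‖f (x + q)‖ + N * ‖g (x + q)‖) :
    eLpNorm v 2 volume ≤ eLpNorm f 2 volume + ENNReal.ofReal N * eLpNorm g 2 volume := by
  have hq : MeasurePreserving (fun x : R2 => x + q) volume volume := measurePreserving_add_right _ q
  have e1 := eLpNorm_comp_measurePreserving (p := 2) hf.aestronglyMeasurable hq
  have e2 := eLpNorm_comp_measurePreserving (p := 2) hg.aestronglyMeasurable hq
  have hfc : Continuous (f ∘ (fun x : R2 => x + q)) := by fun_prop
  have hgc : Continuous (g ∘ (fun x : R2 => x + q)) := by fun_prop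
  calc eLpNorm v 2 volume
      ≤ eLpNorm ((fun x => ‖(f ∘ (fun x : R2 => x + q)) x‖)
          + (N • fun x => ‖(g ∘ (fun x : R2 => x + q)) x‖)) 2 volume := by
        refine eLpNorm_mono_real (fun x => ?_)
        simpa using! h x
    _ ≤ eLpNorm (fun x => ‖(f ∘ (fun x : R2 => x + q)) x‖) 2 volume
          + eLpNorm (N • fun x => ‖(g ∘ (fun x : R2 => x + q)) x‖) 2 volume :=
        eLpNorm_add_le hfc.norm.aestronglyMeasurable
          (hgc.norm.aestronglyMeasurable.const_smul N) (by norm_num)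
    _ = _ := by
        rw [eLpNorm_const_smul, eLpNorm_norm, eLpNorm_norm, e1, e2, Real.enorm_eq_ofReal hN]

lemma energy (a b : R2 → ℝ) (ha : a.HasTemperateGrowth) (hb : b.HasTemperateGrowth)
    (V : R2 → ℝ) (M : ℝ) (hM : 0 ≤ M) (hV : ∀ x, V x ≤ M) (u : SchwartzMap R2 ℂ)
    (hu : ∀ x, opG 0 a (opG 0 a u) x + opG 1 b (opG 1 b u) x = ((V x : ℝ) : ℂ) * u x) :
    eLpNorm (opG 0 a u) 2 volume ≤ ENNReal.ofReal (Real.sqrt M) * eLpNorm u 2 volume ∧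
    eLpNorm (opG 1 b u) 2 volume ≤ ENNReal.ofReal (Real.sqrt M) * eLpNorm u 2 volume := by
  obtain ⟨f, hf⟩ := opG_schwartz 0 a ha u
  obtain ⟨g, hg⟩ := opG_schwartz 1 b hb u
  obtain ⟨f', hf'⟩ := opG_schwartz 0 a ha f
  obtain ⟨g', hg'⟩ := opG_schwartz 1 b hb g
  have ef : opG 0 a u = f := (funext hf).symm
  have eg : opG 1 b u = g := (funext hg).symm
  have s1 := opG_symm 0 a u f f f' hf hf'
  have s2 := opG_symm 1 b u g g g' hg hg'
  have hle : (∫ x, inner ℝ (f x) (f x)) + (∫ x, inner ℝ (g x) (g x))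
      ≤ M * ∫ x, inner ℝ (u x) (u x) := by
    rw [← s1, ← s2, ← integral_add (schwartz_inner_integrable u f')
      (schwartz_inner_integrable u g'), ← integral_const_mul]
    refine integral_mono ((schwartz_inner_integrable u f').add
      (schwartz_inner_integrable u g')) ((schwartz_inner_integrable u u).const_mul M) (fun x => ?_)
    have h1 := hu x
    rw [ef, eg, ← hf', ← hg'] at h1
    simp only
    rw [← inner_add_right, h1, ← Complex.real_smul, inner_smul_right]
    exact mul_le_mul_of_nonneg_right (hV x) real_inner_self_nonneg
  have p1 : 0 ≤ ∫ x, inner ℝ (f x) (f x) := integral_nonneg (fun x => real_inner_self_nonneg)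
  have p2 : 0 ≤ ∫ x, inner ℝ (g x) (g x) := integral_nonneg (fun x => real_inner_self_nonneg)
  rw [ef, eg, schwartz_eLp, schwartz_eLp, schwartz_eLp, ← ENNReal.ofReal_mul (Real.sqrt_nonneg _),
    ← Real.sqrt_mul hM]
  exact ⟨ENNReal.ofReal_le_ofReal (Real.sqrt_le_sqrt (by linarith)),
    ENNReal.ofReal_le_ofReal (Real.sqrt_le_sqrt (by linarith))⟩

lemma pdR_beta_bd (β : R2 → ℝ) (hβ_smooth : ContDiff ℝ (⊤ : ℕ∞) β) (hβ_supp : HasCompactSupport β) :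
    ∃ M, 0 ≤ M ∧ ∀ j x, |pdR j β x| ≤ M := by
  obtain ⟨M, hM⟩ := (hβ_supp.fderiv ℝ).exists_bound_of_continuous
    (hβ_smooth.continuous_fderiv (by simp))
  refine ⟨M, (norm_nonneg _).trans (hM 0), fun j x => ?_⟩
  have h1 := (fderiv ℝ β x).le_opNorm (EuclideanSpace.single j 1 : R2)
  simp only [EuclideanSpace.norm_single, norm_one, mul_one] at h1
  exact h1.trans (hM x)

/-- For `λ ∈ [0,Λ]` and solutions of `P u = 0`, the localized conjugated function
`w(x) = e^{iσ(x,∇φ(q))} β(x) u(x+q)` satisfies `‖Aw‖_{L²}, ‖Bw‖_{L²} ≤ C ‖u‖_{L²}`,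
uniformly in `q`. -/
theorem stmt14 (φ : R2 → ℝ) (hφ_smooth : ContDiff ℝ (⊤ : ℕ∞) φ)
    (hφ_bd : ∀ n : ℕ, 2 ≤ n → ∃ C : ℝ, ∀ x : R2, ‖iteratedFDeriv ℝ n φ x‖ ≤ C)
    (β : R2 → ℝ) (hβ_smooth : ContDiff ℝ (⊤ : ℕ∞) β) (hβ_supp : HasCompactSupport β)
    (hβ_range : ∀ x : R2, 0 ≤ β x ∧ β x ≤ 1)
    (hβ_one : ∀ x : R2, ‖x‖ ≤ 1 → β x = 1) (hβ_zero : ∀ x : R2, 2 ≤ ‖x‖ → β x = 0) :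
    ∀ Λ : ℝ, 0 < Λ → ∃ C > 0, ∀ l ∈ Set.Icc (0 : ℝ) Λ, ∀ q : R2, ∀ u : SchwartzMap R2 ℂ,
      (∀ x : R2, opP φ l (⇑u) x = 0) →
      eLpNorm (opA φ (wFun φ β q (⇑u))) 2 volume ≤
          ENNReal.ofReal C * eLpNorm (⇑u) 2 volume ∧
      eLpNorm (opB φ (wFun φ β q (⇑u))) 2 volume ≤
          ENNReal.ofReal C * eLpNorm (⇑u) 2 volume := by
  intro Λ hΛ
  obtain ⟨K, hKd⟩ := hφ_bd 2 le_rfl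
  have hK0 : 0 ≤ K := (norm_nonneg _).trans (hKd 0)
  obtain ⟨hd2, hdiff, hlip⟩ := fder_lip φ hφ_smooth K hKd
  have htemp := fder_temp φ hφ_smooth hφ_bd
  obtain ⟨M, hM0, hM⟩ := pdR_beta_bd β hβ_smooth hβ_supp
  have hβd : Differentiable ℝ β := hβ_smooth.differentiable (by simp)
  set a : R2 → ℝ := fun x => -(pdR 1 φ x / 2) with ha
  set b : R2 → ℝ := fun x => pdR 0 φ x / 2 with hb
  have hat : a.HasTemperateGrowth := by
    convert pdR_temp φ htemp 1 (-1/2) using 2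
    simp only [ha]; ring
  have hbt : b.HasTemperateGrowth := by
    convert pdR_temp φ htemp 0 (1/2) using 2
    simp only [hb]; ring
  have haK : ∀ x y, |a x - a y| ≤ K * ‖x - y‖ := by
    intro x y
    have h := pdR_lip φ K hlip 1 x y
    have h0 := abs_nonneg (pdR 1 φ x - pdR 1 φ y)
    have e : a x - a y = (pdR 1 φ x - pdR 1 φ y) * (-1/2) := by simp only [ha]; ring
    rw [e, abs_mul]
    norm_num
    linarith
  have hbK : ∀ x y, |b x - b y| ≤ K * ‖x - y‖ := by
    intro x y
    have h := pdR_lip φ K hlip 0 x y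
    have h0 := abs_nonneg (pdR 0 φ x - pdR 0 φ y)
    have e : b x - b y = (pdR 0 φ x - pdR 0 φ y) * (1/2) := by simp only [hb]; ring
    rw [e, abs_mul]
    norm_num
    linarith
  set S : ℝ := Real.sqrt (K + Λ ^ 2) with hS
  set N : ℝ := 4 * K + (|a 0| + |b 0|) + M with hN
  have hN0 : 0 ≤ N := by positivity
  have hS0 : 0 < S := Real.sqrt_pos.mpr (by positivity)
  refine ⟨S + N, by positivity, fun l hl q u hu => ?_⟩
  have hE := energy a b hat hbt (fun x => lapR φ x / 4 + l ^ 2) (K + Λ ^ 2) (by positivity)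
    (fun x => by
      have h1 := pdR2_bd φ K hdiff hd2 0 0 x
      have h2 := pdR2_bd φ K hdiff hd2 1 1 x
      have h3 : l ^ 2 ≤ Λ ^ 2 := pow_le_pow_left₀ hl.1 hl.2 2
      have h4 := le_abs_self (pdR 0 (pdR 0 φ) x)
      have h5 := le_abs_self (pdR 1 (pdR 1 φ) x)
      simp only [lapR]
      linarith) u
    (fun x => by
      have h := hu x
      simp only [opP, opA_eq, opB_eq] at h
      push_cast at h ⊢
      linear_combination h)
  rw [ENNReal.ofReal_add hS0.le hN0, add_mul, opA_eq, opB_eq]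
  obtain ⟨f, hf⟩ := opG_schwartz 0 a hat u
  obtain ⟨g, hg⟩ := opG_schwartz 1 b hbt u
  have ef : opG 0 a u = f := (funext hf).symm
  have eg : opG 1 b u = g := (funext hg).symm
  constructor
  · refine (w_eLp _ (opG 0 a u) u (ef ▸ f.continuous) u.continuous N hN0 q (fun x => ?_)).trans
      (add_le_add hE.1 le_rfl)
    refine (w_bound φ β hβd u 0 a q (fun x => ?_) K hK0 haK hβ_range hβ_zero M (hM 0) x).trans ?_
    · rw [pdR, (sigma_hasFDerivAt φ q x).fderiv]
      simp [ha]
      ring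
    · have := abs_nonneg (b 0)
      gcongr
      linarith
  · refine (w_eLp _ (opG 1 b u) u (eg ▸ g.continuous) u.continuous N hN0 q (fun x => ?_)).trans
      (add_le_add hE.2 le_rfl)
    refine (w_bound φ β hβd u 1 b q (fun x => ?_) K hK0 hbK hβ_range hβ_zero M (hM 1) x).trans ?_
    · rw [pdR, (sigma_hasFDerivAt φ q x).fderiv]
      simp [hb]
      ring
    · have := abs_nonneg (a 0)
      gcongr
      linarith
end
end

section
/- For every Λ > 0 there is a constant C > 0, depending only on φ, β and Λ, such that for every λ ∈ [0,Λ], every q ∈ ℝ², and every Schwartz function u : ℝ² → ℂ satisfying Pu = 0: ‖β_q u‖_{L^∞(ℝ²)} ≤ C ( ‖P(β_q u)‖_{L²(ℝ²)} + ‖u‖_{L²(ℝ²)} ), where β_q(x) := β(x−q). -/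
noncomputable section

open MeasureTheory Complex

open scoped LineDeriv SchwartzMap FourierTransform

def e2 (j : Fin 2) : R2 := EuclideanSpace.single j 1

def lapS (w : 𝓢(R2, ℂ)) : 𝓢(R2, ℂ) := ∂_{e2 0} (∂_{e2 0} w) + ∂_{e2 1} (∂_{e2 1} w)

def S2 (w : R2 → ℂ) : ℝ := ∫ x, ‖w x‖ ^ 2

lemma sq_int (w : 𝓢(R2, ℂ)) : Integrable (fun x => ‖w x‖ ^ 2) :=
  (w.memLp 2 volume).integrable_norm_pow (by norm_num)

lemma fourier_lap (w : 𝓢(R2, ℂ)) (ξ : R2) :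
    𝓕 (lapS w) ξ = -((4 * Real.pi ^ 2 * ‖ξ‖ ^ 2 : ℝ) : ℂ) * 𝓕 w ξ := by
  have h : ∀ m : R2, (fun x : R2 => inner ℝ x m).HasTemperateGrowth := fun m =>
    ((innerSL ℝ).flip m).hasTemperateGrowth
  have h1 : ∀ (f : 𝓢(R2, ℂ)) (m : R2), 𝓕 (∂_{m} f) ξ =
      (2 * Real.pi * Complex.I) * ((inner ℝ ξ m : ℝ) : ℂ) * 𝓕 f ξ := by
    intro f m
    rw [SchwartzMap.fourier_lineDerivOp_eq]
    simp [SchwartzMap.smulLeftCLM_apply_apply (h m), mul_assoc]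
  have h2 : 𝓕 (lapS w) ξ = 𝓕 (∂_{e2 0} (∂_{e2 0} w)) ξ + 𝓕 (∂_{e2 1} (∂_{e2 1} w)) ξ := by
    rw [lapS, FourierTransform.fourier_add]; rfl
  rw [h2, h1, h1, h1, h1, EuclideanSpace.norm_sq_eq]
  simp [e2, EuclideanSpace.inner_single_right]
  linear_combination (4 * (Real.pi : ℂ) ^ 2 * 𝓕 w ξ * ((ξ 0 : ℂ) ^ 2 + (ξ 1 : ℂ) ^ 2)) * Complex.I_sq

lemma cs_int (f g : R2 → ℝ) (hf0 : ∀ x, 0 ≤ f x) (hg0 : ∀ x, 0 ≤ g x) (hf : MemLp f 2 volume)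
    (hg : MemLp g 2 volume) :
    (∫ x, f x * g x) ^ 2 ≤ (∫ x, f x ^ 2) * ∫ x, g x ^ 2 := by
  have := integral_mul_le_Lp_mul_Lq_of_nonneg (μ := volume) (p := 2) (q := 2)
    (by constructor <;> norm_num) (Filter.Eventually.of_forall hf0)
    (Filter.Eventually.of_forall hg0) (by simpa using hf) (by simpa using hg)
  have hA : 0 ≤ ∫ x, f x ^ 2 := integral_nonneg fun x => by positivity
  have hB : 0 ≤ ∫ x, g x ^ 2 := integral_nonneg fun x => by positivity
  have h0 : 0 ≤ ∫ x, f x * g x := integral_nonneg fun x => mul_nonneg (hf0 x) (hg0 x)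
  simp only [Real.rpow_two, ← Real.sqrt_eq_rpow] at this
  calc _ ≤ (√(∫ x, f x ^ 2) * √(∫ x, g x ^ 2)) ^ 2 := by gcongr
    _ = _ := by rw [mul_pow, Real.sq_sqrt hA, Real.sq_sqrt hB]

lemma sup_bound : ∃ C : ℝ, 0 ≤ C ∧ ∀ (w : 𝓢(R2, ℂ)) (x : R2),
    ‖w x‖ ^ 2 ≤ C * (S2 w + S2 (lapS w)) := by
  have hk : Integrable (fun x : R2 => ((1 + ‖x‖ ^ 2)⁻¹) ^ 2) := by
    refine (integrable_rpow_neg_one_add_norm_sq (E := R2) (μ := volume) (r := 4)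
      (by simp; norm_num)).congr (Filter.Eventually.of_forall fun x => ?_)
    have : (0:ℝ) ≤ 1 + ‖x‖ ^ 2 := by positivity
    simp only
    rw [show (-4 / 2 : ℝ) = -(2:ℕ) by norm_num, Real.rpow_neg this, Real.rpow_natCast, inv_pow]
  have hkm : MemLp (fun x : R2 => (1 + ‖x‖ ^ 2)⁻¹) 2 volume := by
    refine (memLp_two_iff_integrable_sq ?_).2 hk
    refine Continuous.aestronglyMeasurable ?_
    exact Continuous.inv₀ (by fun_prop) (fun x => by positivity)
  refine ⟨(∫ x : R2, ((1 + ‖x‖ ^ 2)⁻¹) ^ 2) * 2, mul_nonneg (integral_nonneg fun x => by positivity) (by norm_num), ?_⟩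
  intro w x
  set h := w - lapS w with hh
  have h1 : ∀ ξ, ‖𝓕 w ξ‖ ≤ (1 + ‖ξ‖ ^ 2)⁻¹ * ‖𝓕 h ξ‖ := by
    intro ξ
    have e : 𝓕 h ξ = ((1 + 4 * Real.pi ^ 2 * ‖ξ‖ ^ 2 : ℝ) : ℂ) * 𝓕 w ξ := by
      have : 𝓕 h ξ = 𝓕 w ξ - 𝓕 (lapS w) ξ := by
        rw [hh, sub_eq_add_neg, FourierTransform.fourier_add, FourierTransform.fourier_neg, ← sub_eq_add_neg]; rfl
      rw [this, fourier_lap]; push_cast; ring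
    rw [e, norm_mul, Complex.norm_real, Real.norm_of_nonneg (by positivity), inv_mul_eq_div,
      le_div_iff₀ (by positivity), mul_comm]
    gcongr
    have : 1 ≤ 4 * Real.pi ^ 2 := by nlinarith [Real.pi_gt_three]
    nlinarith [sq_nonneg ‖ξ‖]
  have h2 : ‖w x‖ ≤ ∫ ξ, ‖𝓕 w ξ‖ := by
    have e : w x = 𝓕⁻ (𝓕 w) x := by rw [FourierTransform.fourierInv_fourier_eq]
    rw [e, SchwartzMap.fourierInv_coe, Real.fourierInv_eq]
    refine (norm_integral_le_integral_norm _).trans (le_of_eq ?_)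
    simp
  have h3 : (∫ ξ, ‖𝓕 w ξ‖) ≤ ∫ ξ, (1 + ‖ξ‖ ^ 2)⁻¹ * ‖𝓕 h ξ‖ := by
    refine integral_mono (𝓕 w).integrable.norm ?_ h1
    exact MemLp.integrable_mul (p := 2) (q := 2) hkm ((𝓕 h).memLp 2 volume).norm
  have h4 := cs_int (fun ξ => (1 + ‖ξ‖ ^ 2)⁻¹) (fun ξ => ‖𝓕 h ξ‖) (fun ξ => by positivity)
    (fun ξ => by positivity) hkm ((𝓕 h).memLp 2 volume).norm
  rw [SchwartzMap.integral_norm_sq_fourier] at h4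
  have h5 : (∫ x, ‖h x‖ ^ 2) ≤ 2 * (S2 w + S2 (lapS w)) := by
    rw [S2, S2, ← integral_add (sq_int _) (sq_int _), ← integral_const_mul]
    refine integral_mono (sq_int _) (((sq_int w).add (sq_int (lapS w))).const_mul 2) fun y => ?_
    have : ‖h y‖ ≤ ‖w y‖ + ‖lapS w y‖ := by rw [hh]; exact norm_sub_le _ _
    simp only
    nlinarith [norm_nonneg (h y), sq_nonneg (‖w y‖ - ‖lapS w y‖)]
  calc ‖w x‖ ^ 2 ≤ (∫ ξ, (1 + ‖ξ‖ ^ 2)⁻¹ * ‖𝓕 h ξ‖) ^ 2 := by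
        gcongr; exact h2.trans h3
    _ ≤ _ := h4
    _ ≤ _ := by
      rw [mul_assoc]
      exact mul_le_mul_of_nonneg_left h5 (integral_nonneg fun x => by positivity)

lemma grad_bound (w : 𝓢(R2, ℂ)) (ε : ℝ) (hε : 0 < ε) :
    S2 (∂_{e2 0} w : 𝓢(R2, ℂ)) + S2 (∂_{e2 1} w : 𝓢(R2, ℂ)) ≤ ε * S2 (lapS w) + (1 / (4 * ε)) * S2 w := by
  have h1 : ∀ m : R2, S2 (∂_{m} w : 𝓢(R2, ℂ)) = - ∫ x, inner ℝ (w x) (∂_{m} (∂_{m} w) x) := by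
    intro m
    have : ∫ x, inner ℝ (w x) (∂_{m} (∂_{m} w) x) = - ∫ x, inner ℝ (∂_{m} w x) (∂_{m} w x) :=
      SchwartzMap.integral_bilinear_lineDerivOp_right_eq_neg_left (μ := volume) w (∂_{m} w)
        (innerSL ℝ) m
    rw [this, neg_neg, S2]
    simp only [real_inner_self_eq_norm_sq]
  have hi : ∀ g : 𝓢(R2, ℂ), Integrable (fun x => inner ℝ (w x) (g x)) := fun g => by
    refine Integrable.mono' (((w.memLp 2 volume).norm).integrable_mul (p := 2) (q := 2) ((g.memLp 2 volume).norm)) ?_ ?_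
    · exact (Continuous.inner w.continuous g.continuous).aestronglyMeasurable
    · exact Filter.Eventually.of_forall fun x => norm_inner_le_norm _ _
  rw [h1, h1, ← neg_add, ← integral_add (hi _) (hi _), S2, S2, ← integral_const_mul,
    ← integral_const_mul, ← integral_add ((sq_int _).const_mul _) ((sq_int _).const_mul _), ← integral_neg]
  refine integral_mono ((hi _).add (hi _)).neg (((sq_int _).const_mul _).add ((sq_int _).const_mul _)) fun x => ?_
  simp only
  rw [← inner_add_right]
  have e : ∂_{e2 0} (∂_{e2 0} w) x + ∂_{e2 1} (∂_{e2 1} w) x = lapS w x := rfl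
  rw [e]
  have h2 := abs_real_inner_le_norm (w x) (lapS w x)
  have h3 := neg_abs_le (inner ℝ (w x) (lapS w x))
  have h4 : ε * ‖lapS w x‖ ^ 2 + 1 / (4 * ε) * ‖w x‖ ^ 2 - ‖w x‖ * ‖lapS w x‖
     = (2 * ε * ‖lapS w x‖ - ‖w x‖) ^ 2 / (4 * ε) := by field_simp; ring
  have h5 : 0 ≤ (2 * ε * ‖lapS w x‖ - ‖w x‖) ^ 2 / (4 * ε) := by positivity
  linarith

lemma pdC_mul (j : Fin 2) (f g : R2 → ℂ) (x : R2) (hf : DifferentiableAt ℝ f x)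
    (hg : DifferentiableAt ℝ g x) :
    pdC j (fun y => f y * g y) x = pdC j f x * g x + f x * pdC j g x := by
  unfold pdC
  rw [fderiv_fun_mul hf hg]
  simp; ring

lemma pdC_add (j : Fin 2) (f g : R2 → ℂ) (x : R2) (hf : DifferentiableAt ℝ f x)
    (hg : DifferentiableAt ℝ g x) :
    pdC j (fun y => f y + g y) x = pdC j f x + pdC j g x := by
  unfold pdC
  rw [fderiv_fun_add hf hg]
  rfl

lemma pdC_const_mul (j : Fin 2) (c : ℂ) (f : R2 → ℂ) (x : R2) (hf : DifferentiableAt ℝ f x) :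
    pdC j (fun y => c * f y) x = c * pdC j f x := by
  unfold pdC
  rw [fderiv_const_mul hf]
  rfl

lemma pdC_ofReal (j : Fin 2) (f : R2 → ℝ) (x : R2) (hf : DifferentiableAt ℝ f x) :
    pdC j (fun y => (f y : ℂ)) x = (pdR j f x : ℂ) := by
  unfold pdC pdR
  have := (Complex.ofRealCLM.hasFDerivAt.comp x hf.hasFDerivAt).fderiv
  have e : (fun y => (f y : ℂ)) = (Complex.ofRealCLM ∘ f) := rfl
  rw [e, this]; simp

def gE (κ : Fin 2 → ℝ) (x : R2) : ℂ := Complex.exp (Complex.I * ((κ 0 * x 0 + κ 1 * x 1 : ℝ) : ℂ))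

lemma gE_norm (κ : Fin 2 → ℝ) (x : R2) : ‖gE κ x‖ = 1 := by
  rw [gE, mul_comm, Complex.norm_exp_ofReal_mul_I]

lemma gE_phase_hasFDerivAt (κ : Fin 2 → ℝ) (x : R2) :
    HasFDerivAt (fun x : R2 => κ 0 * x 0 + κ 1 * x 1)
      (κ 0 • (EuclideanSpace.proj 0 : R2 →L[ℝ] ℝ) + κ 1 • (EuclideanSpace.proj 1 : R2 →L[ℝ] ℝ)) x :=
  (κ 0 • (EuclideanSpace.proj 0 : R2 →L[ℝ] ℝ) + κ 1 • (EuclideanSpace.proj 1 : R2 →L[ℝ] ℝ)).hasFDerivAt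

lemma gE_contDiff (κ : Fin 2 → ℝ) : ContDiff ℝ (⊤ : ℕ∞) (gE κ) := by
  unfold gE
  refine ContDiff.cexp (contDiff_const.mul (Complex.ofRealCLM.contDiff.comp ?_))
  exact (κ 0 • (EuclideanSpace.proj 0 : R2 →L[ℝ] ℝ) + κ 1 • (EuclideanSpace.proj 1 : R2 →L[ℝ] ℝ)).contDiff

lemma pdC_gE (κ : Fin 2 → ℝ) (j : Fin 2) (x : R2) :
    pdC j (gE κ) x = Complex.I * κ j * gE κ x := by
  have h := gE_phase_hasFDerivAt κ x
  have h2 := ((Complex.ofRealCLM.hasFDerivAt.comp x h).const_mul Complex.I).cexp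
  unfold pdC
  have h3 : fderiv ℝ (gE κ) x = _ := h2.fderiv
  rw [h3]
  fin_cases j <;> simp [gE] <;> ring

lemma Dop_gE (κ : Fin 2 → ℝ) (j : Fin 2) (w : R2 → ℂ) (x : R2) (hw : DifferentiableAt ℝ w x) :
    Dop j (fun y => gE κ y * w y) x = gE κ x * (Dop j w x + κ j * w x) := by
  unfold Dop
  rw [pdC_mul j _ _ x ((gE_contDiff κ).differentiable (by simp) x) hw, pdC_gE]
  linear_combination (-(κ j : ℂ) * gE κ x * w x) * Complex.I_sq

/-- One magnetic derivative, squared, after conjugation by the phase. -/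
lemma T_sq (κ : Fin 2 → ℝ) (j : Fin 2) (a : R2 → ℝ) (ha : Differentiable ℝ a)
    (w : R2 → ℂ) (hw : Differentiable ℝ w) (hw' : Differentiable ℝ (pdC j w)) (x : R2)
    (T : (R2 → ℂ) → R2 → ℂ) (hT : ∀ f y, T f y = Dop j f y / 2 - ((a y / 2 : ℝ) : ℂ) * f y) :
    T (T (fun y => gE κ y * w y)) x = gE κ x * (1 / 4) *
      (- pdC j (pdC j w) x + 2 * Complex.I * ((a x - κ j : ℝ) : ℂ) * pdC j w x
        + Complex.I * (pdR j a x : ℂ) * w x + ((a x - κ j : ℝ) : ℂ) ^ 2 * w x) := by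
  have hb : Differentiable ℝ (fun y => ((a y - κ j : ℝ) : ℂ)) := fun y =>
    Complex.ofRealCLM.differentiableAt.comp y ((ha y).sub_const _)
  have e1 : T (fun y => gE κ y * w y) = fun y => gE κ y *
      ((-Complex.I / 2) * pdC j w y + (-1 / 2) * (((a y - κ j : ℝ) : ℂ) * w y)) := by
    funext y
    rw [hT, Dop_gE κ j w y (hw y), Dop]; push_cast; ring
  have d1 : Differentiable ℝ (fun y => (-Complex.I / 2) * pdC j w y) := hw'.const_mul _
  have d2 : Differentiable ℝ (fun y => (-1 / 2 : ℂ) * (((a y - κ j : ℝ) : ℂ) * w y)) :=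
    (hb.mul hw).const_mul _
  have e2 : pdC j (fun y => (-Complex.I / 2) * pdC j w y +
      (-1 / 2) * (((a y - κ j : ℝ) : ℂ) * w y)) x = (-Complex.I / 2) * pdC j (pdC j w) x +
      (-1 / 2) * ((pdR j a x : ℂ) * w x + ((a x - κ j : ℝ) : ℂ) * pdC j w x) := by
    have h1 : pdC j (fun y => ((a y - κ j : ℝ) : ℂ)) x = (pdR j a x : ℂ) := by
      rw [pdC_ofReal j _ x ((ha x).sub_const _)]
      unfold pdR; rw [fderiv_sub_const]
    rw [← h1, ← pdC_mul j _ w x (hb x) (hw x)]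
    rw [pdC_add j _ _ x (d1 x) (d2 x), pdC_const_mul j _ _ x (hw' x),
      pdC_const_mul j _ _ x ((hb x).fun_mul (hw x))]
  rw [hT, e1, Dop_gE κ j _ x ((d1 x).fun_add (d2 x)), Dop, e2]
  push_cast
  linear_combination (gE κ x * pdC j (pdC j w) x / 4) * Complex.I_sq

lemma opP_gauge (φ : R2 → ℝ) (hφ : ContDiff ℝ (⊤ : ℕ∞) φ) (l : ℝ) (κ : Fin 2 → ℝ)
    (w : 𝓢(R2, ℂ)) (x : R2) :
    opP φ l (fun y => gE κ y * w y) x = gE κ x * (1 / 4) *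
      (- lapS w x
        + 2 * Complex.I * ((pdR 1 φ x - κ 0 : ℝ) : ℂ) * (∂_{e2 0} w : 𝓢(R2, ℂ)) x
        + 2 * Complex.I * ((- pdR 0 φ x - κ 1 : ℝ) : ℂ) * (∂_{e2 1} w : 𝓢(R2, ℂ)) x
        + (Complex.I * (pdR 0 (pdR 1 φ) x : ℂ) + Complex.I * (pdR 1 (fun y => - pdR 0 φ y) x : ℂ)
          + ((pdR 1 φ x - κ 0 : ℝ) : ℂ) ^ 2 + ((- pdR 0 φ x - κ 1 : ℝ) : ℂ) ^ 2
          - (lapR φ x : ℂ) - 4 * (l : ℂ) ^ 2) * w x) := by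
  have hd : ∀ j, Differentiable ℝ (pdR j φ) := fun j =>
    ((hφ.fderiv_right (m := 1) (by norm_cast)).clm_apply contDiff_const).differentiable (by simp)
  have hp : ∀ (f : 𝓢(R2, ℂ)) j, pdC j f = (∂_{e2 j} f : 𝓢(R2, ℂ)) := fun f j => rfl
  have hA := T_sq κ 0 (pdR 1 φ) (hd 1) w w.differentiable
    (by rw [hp]; exact SchwartzMap.differentiable _) x (opA φ) (fun f y => rfl)
  have hB := T_sq κ 1 (fun y => - pdR 0 φ y) (hd 0).fun_neg w w.differentiable
    (by rw [hp]; exact SchwartzMap.differentiable _) x (opB φ)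
    (fun f y => by rw [opB]; push_cast; ring)
  rw [opP, hA, hB, hp, hp, hp, hp]
  have e : lapS w x = (∂_{e2 0} (∂_{e2 0} w) : 𝓢(R2, ℂ)) x + (∂_{e2 1} (∂_{e2 1} w) : 𝓢(R2, ℂ)) x := rfl
  rw [e]
  push_cast
  ring

lemma pdR_bounds (φ : R2 → ℝ) (hφ : ContDiff ℝ (⊤ : ℕ∞) φ) (M : ℝ)
    (hM : ∀ x : R2, ‖iteratedFDeriv ℝ 2 φ x‖ ≤ M) :
    (∀ j x y, |pdR j φ x - pdR j φ y| ≤ M * ‖x - y‖) ∧ ∀ i j x, |pdR i (pdR j φ) x| ≤ M := by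
  have hd : Differentiable ℝ (fderiv ℝ φ) :=
    (hφ.fderiv_right (m := 1) (by norm_cast)).differentiable (by simp)
  have hb : ∀ x, ‖fderiv ℝ (fderiv ℝ φ) x‖ ≤ M := fun x => by
    rw [← norm_iteratedFDeriv_one, norm_iteratedFDeriv_fderiv]; exact hM x
  have hs : ∀ j : Fin 2, ‖(EuclideanSpace.single j 1 : R2)‖ = 1 := fun j => by simp
  constructor
  · intro j x y
    have h := Convex.norm_image_sub_le_of_norm_fderiv_le (𝕜 := ℝ) (s := Set.univ) (x := y) (y := x)
      (fun z _ => hd z) (fun z _ => hb z) convex_univ (Set.mem_univ _) (Set.mem_univ _)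
    have h2 := (fderiv ℝ φ x - fderiv ℝ φ y).le_opNorm (EuclideanSpace.single j 1)
    rw [hs, mul_one] at h2
    exact h2.trans h
  · intro i j x
    have e : pdR i (pdR j φ) x =
        fderiv ℝ (fderiv ℝ φ) x (EuclideanSpace.single i 1) (EuclideanSpace.single j 1) := by
      unfold pdR
      rw [fderiv_clm_apply (hd x) (by fun_prop)]
      simp
    rw [e, ← Real.norm_eq_abs]
    refine (ContinuousLinearMap.le_opNorm₂ _ _ _).trans ?_
    rw [hs, hs, mul_one, mul_one]; exact hb x

lemma lap_pointwise (φ : R2 → ℝ) (hφ : ContDiff ℝ (⊤ : ℕ∞) φ) (M : ℝ)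
    (hM : ∀ x : R2, ‖iteratedFDeriv ℝ 2 φ x‖ ≤ M) (Λ l : ℝ) (hl : l ∈ Set.Icc 0 Λ) (q : R2)
    (κ : Fin 2 → ℝ) (hκ0 : κ 0 = pdR 1 φ q) (hκ1 : κ 1 = - pdR 0 φ q) (w : 𝓢(R2, ℂ))
    (hw : ∀ x, 2 ≤ ‖x - q‖ → w x = 0) (x : R2) :
    ‖lapS w x‖ ≤ 4 * ‖opP φ l (fun y => gE κ y * w y) x‖ +
      (4 * M + 8 * M ^ 2 + 4 * Λ ^ 2) *
        (‖(∂_{e2 0} w : 𝓢(R2, ℂ)) x‖ + ‖(∂_{e2 1} w : 𝓢(R2, ℂ)) x‖ + ‖w x‖) := by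
  have hM0 : 0 ≤ M := (norm_nonneg _).trans (hM 0)
  obtain ⟨hb1, hb2⟩ := pdR_bounds φ hφ M hM
  by_cases hx : 2 < ‖x - q‖
  · have hts : x ∉ tsupport w := by
      rw [notMem_tsupport_iff_eventuallyEq]
      have : ∀ᶠ y in nhds x, 2 < ‖y - q‖ :=
        (continuous_norm.comp (continuous_id.sub continuous_const)).continuousAt.eventually_const_lt hx
      filter_upwards [this] with y hy using hw y hy.le
    have h0 : ∀ m : R2, (∂_{m} (∂_{m} w) : 𝓢(R2, ℂ)) x = 0 := fun m =>
      image_eq_zero_of_notMem_tsupport fun h => hts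
        (SchwartzMap.tsupport_lineDerivOp_subset m w (SchwartzMap.tsupport_lineDerivOp_subset m _ h))
    have : lapS w x = 0 := by
      change (∂_{e2 0} (∂_{e2 0} w) : 𝓢(R2, ℂ)) x + (∂_{e2 1} (∂_{e2 1} w) : 𝓢(R2, ℂ)) x = 0
      rw [h0, h0, add_zero]
    rw [this, norm_zero]; positivity
  push Not at hx
  have hg := opP_gauge φ hφ l κ w x
  set g := opP φ l (fun y => gE κ y * w y) x
  set b0 := pdR 1 φ x - κ 0
  set b1 := - pdR 0 φ x - κ 1
  have hB0 : |b0| ≤ 2 * M := by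
    have := hb1 1 x q
    rw [← hκ0] at this
    nlinarith
  have hB1 : |b1| ≤ 2 * M := by
    have := hb1 0 x q
    have e : b1 = -(pdR 0 φ x - pdR 0 φ q) := by simp only [b1, hκ1]; ring
    rw [e, abs_neg]
    nlinarith
  have hneg : pdR 1 (fun y => - pdR 0 φ y) x = - pdR 1 (pdR 0 φ) x := by
    unfold pdR; rw [fderiv_fun_neg]; rfl
  rw [hneg] at hg
  set Z : ℂ := (Complex.I * (pdR 0 (pdR 1 φ) x : ℂ) + Complex.I * ((- pdR 1 (pdR 0 φ) x : ℝ) : ℂ)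
          + ((b0 : ℝ) : ℂ) ^ 2 + ((b1 : ℝ) : ℂ) ^ 2
          - (lapR φ x : ℂ) - 4 * (l : ℂ) ^ 2) with hZ
  have hE := gE_norm κ x
  set U : ℂ := 2 * Complex.I * (b0 : ℂ) * (∂_{e2 0} w : 𝓢(R2, ℂ)) x
  set V : ℂ := 2 * Complex.I * (b1 : ℂ) * (∂_{e2 1} w : 𝓢(R2, ℂ)) x
  have h4g : ‖-lapS w x + U + V + Z * w x‖ = 4 * ‖g‖ := by
    rw [hg, norm_mul, norm_mul, hE]; norm_num; ring
  have hU : ‖U‖ ≤ 4 * M * ‖(∂_{e2 0} w : 𝓢(R2, ℂ)) x‖ := by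
    simp only [U, norm_mul, Complex.norm_I, Complex.norm_real, Complex.norm_ofNat, Real.norm_eq_abs]
    nlinarith [hB0, hB1, mul_le_mul_of_nonneg_right hB0 (norm_nonneg ((∂_{e2 0} w : 𝓢(R2, ℂ)) x))]
  have hV : ‖V‖ ≤ 4 * M * ‖(∂_{e2 1} w : 𝓢(R2, ℂ)) x‖ := by
    simp only [V, norm_mul, Complex.norm_I, Complex.norm_real, Complex.norm_ofNat, Real.norm_eq_abs]
    nlinarith [hB0, hB1, mul_le_mul_of_nonneg_right hB1 (norm_nonneg ((∂_{e2 1} w : 𝓢(R2, ℂ)) x))]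
  have hZn : ‖Z‖ ≤ 4 * M + 8 * M ^ 2 + 4 * Λ ^ 2 := by
    have t : ‖Z‖ ≤ |pdR 0 (pdR 1 φ) x| + |pdR 1 (pdR 0 φ) x| + |b0| ^ 2 + |b1| ^ 2 + |lapR φ x| + 4 * |l| ^ 2 := by
      rw [hZ]
      refine (norm_sub_le _ _).trans (add_le_add ((norm_sub_le _ _).trans (add_le_add
        ((norm_add_le _ _).trans (add_le_add ((norm_add_le _ _).trans (add_le_add
        ((norm_add_le _ _).trans (add_le_add ?_ ?_)) ?_)) ?_)) ?_)) ?_) <;> simp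
    have hlap : |lapR φ x| ≤ 2 * M := by
      unfold lapR
      refine (abs_add_le _ _).trans ?_
      linarith [hb2 0 0 x, hb2 1 1 x]
    have h0 : |b0| ^ 2 ≤ (2 * M) ^ 2 := by gcongr
    have h1 : |b1| ^ 2 ≤ (2 * M) ^ 2 := by gcongr
    have h2 : |l| ^ 2 ≤ Λ ^ 2 := by rw [abs_of_nonneg hl.1]; exact pow_le_pow_left₀ hl.1 hl.2 2
    linarith [hb2 0 1 x, hb2 1 0 x]
  have hZw : ‖Z * w x‖ ≤ (4 * M + 8 * M ^ 2 + 4 * Λ ^ 2) * ‖w x‖ := by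
    rw [norm_mul]; gcongr
  have tri : ‖lapS w x‖ ≤ ‖-lapS w x + U + V + Z * w x‖ + ‖U‖ + ‖V‖ + ‖Z * w x‖ := by
    have e : lapS w x = -(-lapS w x + U + V + Z * w x) + U + V + Z * w x := by ring
    conv_lhs => rw [e]
    refine (norm_add_le _ _).trans (add_le_add ((norm_add_le _ _).trans (add_le_add
      ((norm_add_le _ _).trans (add_le_add ?_ le_rfl)) le_rfl)) le_rfl)
    rw [norm_neg]
  have hMM : 4 * M ≤ 4 * M + 8 * M ^ 2 + 4 * Λ ^ 2 := by nlinarith [sq_nonneg M, sq_nonneg Λ]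
  have a1 := mul_le_mul_of_nonneg_right hMM (norm_nonneg ((∂_{e2 0} w : 𝓢(R2, ℂ)) x))
  have a2 := mul_le_mul_of_nonneg_right hMM (norm_nonneg ((∂_{e2 1} w : 𝓢(R2, ℂ)) x))
  linarith

lemma S2_nonneg (f : R2 → ℂ) : 0 ≤ S2 f := integral_nonneg fun x => by positivity

lemma lap_L2 (w : 𝓢(R2, ℂ)) (g : R2 → ℂ) (hg : Integrable (fun x => ‖g x‖ ^ 2)) (K : ℝ) (hK : 0 < K)
    (h : ∀ x, ‖lapS w x‖ ≤ 4 * ‖g x‖ +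
      K * (‖(∂_{e2 0} w : 𝓢(R2, ℂ)) x‖ + ‖(∂_{e2 1} w : 𝓢(R2, ℂ)) x‖ + ‖w x‖)) :
    S2 (lapS w) ≤ 128 * S2 g + (8 * K ^ 2 + 16 * K ^ 4) * S2 w := by
  have h1 : S2 (lapS w) ≤ 64 * S2 g + 4 * K ^ 2 *
      (S2 (∂_{e2 0} w : 𝓢(R2, ℂ)) + S2 (∂_{e2 1} w : 𝓢(R2, ℂ)) + S2 w) := by
    have hab : Integrable (fun x => ‖(∂_{e2 0} w : 𝓢(R2, ℂ)) x‖ ^ 2 +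
        ‖(∂_{e2 1} w : 𝓢(R2, ℂ)) x‖ ^ 2) := (sq_int _).add (sq_int _)
    have habc : Integrable (fun x => ‖(∂_{e2 0} w : 𝓢(R2, ℂ)) x‖ ^ 2 +
        ‖(∂_{e2 1} w : 𝓢(R2, ℂ)) x‖ ^ 2 + ‖w x‖ ^ 2) := hab.add (sq_int _)
    unfold S2
    rw [← integral_add (sq_int _) (sq_int _), ← integral_add hab (sq_int _),
      ← integral_const_mul, ← integral_const_mul, ← integral_add (hg.const_mul _)
        (habc.const_mul _)]
    refine integral_mono (sq_int _) ((hg.const_mul _).add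
        (habc.const_mul _)) fun x => ?_
    have hx := h x
    simp only
    set a := ‖g x‖
    set b := ‖(∂_{e2 0} w : 𝓢(R2, ℂ)) x‖
    set c := ‖(∂_{e2 1} w : 𝓢(R2, ℂ)) x‖
    set d := ‖w x‖
    have h2 : ‖lapS w x‖ ^ 2 ≤ (4 * a + K * (b + c + d)) ^ 2 := by gcongr
    refine h2.trans ?_
    nlinarith [sq_nonneg (4 * a - K * b), sq_nonneg (4 * a - K * c), sq_nonneg (4 * a - K * d),
      sq_nonneg (K * b - K * c), sq_nonneg (K * b - K * d), sq_nonneg (K * c - K * d)]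
  have h2 := grad_bound w (1 / (8 * K ^ 2)) (by positivity)
  have h3 : 4 * K ^ 2 * (1 / (8 * K ^ 2) * S2 (lapS w) + 1 / (4 * (1 / (8 * K ^ 2))) * S2 w)
      = S2 (lapS w) / 2 + 8 * K ^ 4 * S2 w := by field_simp; ring
  have h4 := mul_le_mul_of_nonneg_left h2 (show 0 ≤ 4 * K ^ 2 by positivity)
  rw [h3] at h4
  linarith

lemma eLp_eq (f : R2 → ℂ) (hf : MemLp f 2 volume) :
    eLpNorm f 2 volume = ENNReal.ofReal (√(S2 f)) := by
  rw [hf.eLpNorm_eq_integral_rpow_norm (by norm_num) (by norm_num), S2, Real.sqrt_eq_rpow]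
  simp

/-- For `λ ∈ [0,Λ]` and solutions of `P u = 0`,
`‖β_q u‖_{L^∞} ≤ C (‖P(β_q u)‖_{L²} + ‖u‖_{L²})`, uniformly in `q`. -/
theorem stmt15 (φ : R2 → ℝ) (hφ_smooth : ContDiff ℝ (⊤ : ℕ∞) φ)
    (hφ_bd : ∀ n : ℕ, 2 ≤ n → ∃ C : ℝ, ∀ x : R2, ‖iteratedFDeriv ℝ n φ x‖ ≤ C)
    (β : R2 → ℝ) (hβ_smooth : ContDiff ℝ (⊤ : ℕ∞) β) (hβ_supp : HasCompactSupport β)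
    (hβ_range : ∀ x : R2, 0 ≤ β x ∧ β x ≤ 1)
    (hβ_one : ∀ x : R2, ‖x‖ ≤ 1 → β x = 1) (hβ_zero : ∀ x : R2, 2 ≤ ‖x‖ → β x = 0) :
    ∀ Λ : ℝ, 0 < Λ → ∃ C > 0, ∀ l ∈ Set.Icc (0 : ℝ) Λ, ∀ q : R2, ∀ u : SchwartzMap R2 ℂ,
      (∀ x : R2, opP φ l (⇑u) x = 0) →
      eLpNorm (fun x => ((β (x - q) : ℝ) : ℂ) * u x) ⊤ volume ≤
        ENNReal.ofReal C *
          (eLpNorm (opP φ l (fun x => ((β (x - q) : ℝ) : ℂ) * u x)) 2 volume +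
            eLpNorm (⇑u) 2 volume) := by

  intro Λ hΛ
  obtain ⟨M, hM⟩ := hφ_bd 2 le_rfl
  have hM0 : 0 ≤ M := (norm_nonneg _).trans (hM 0)
  obtain ⟨C0, hC0, hsup⟩ := sup_bound
  set K := 4 * M + 8 * M ^ 2 + 4 * Λ ^ 2 with hKdef
  have hK : 0 < K := by positivity
  set C1 : ℝ := C0 * (128 + 1 + 8 * K ^ 2 + 16 * K ^ 4) + 1 with hC1
  have hC1p : 0 < C1 := by positivity
  refine ⟨√C1, Real.sqrt_pos.2 hC1p, ?_⟩
  intro l hl q u _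
  set v : R2 → ℂ := fun x => ((β (x - q) : ℝ) : ℂ) * u x with hv
  set κ : Fin 2 → ℝ := ![pdR 1 φ q, - pdR 0 φ q] with hκ
  have hβq : ContDiff ℝ (⊤ : ℕ∞) (fun x => ((β (x - q) : ℝ) : ℂ)) :=
    Complex.ofRealCLM.contDiff.comp (hβ_smooth.comp (contDiff_id.sub contDiff_const))
  have hvs : ContDiff ℝ (⊤ : ℕ∞) v := hβq.mul u.smooth'
  have hv0 : ∀ x, 2 ≤ ‖x - q‖ → v x = 0 := fun x hx => by simp [hv, hβ_zero _ hx]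
  have hws : ContDiff ℝ (⊤ : ℕ∞) (fun x => gE (-κ) x * v x) := (gE_contDiff _).mul hvs
  have hwc : HasCompactSupport (fun x => gE (-κ) x * v x) := by
    refine HasCompactSupport.intro (isCompact_closedBall q 2) fun x hx => ?_
    rw [Metric.mem_closedBall, dist_eq_norm, not_le] at hx
    simp only [hv0 x hx.le, mul_zero]
  set w : 𝓢(R2, ℂ) := hwc.toSchwartzMap hws
  have hwx : ∀ x, w x = gE (-κ) x * v x := fun x => rfl
  have hvw : v = fun x => gE κ x * w x := by
    funext x
    have : gE κ x * gE (-κ) x = 1 := by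
      rw [gE, gE, ← Complex.exp_add, ← Complex.exp_zero]
      congr 1
      simp only [Pi.neg_apply]; push_cast; ring
    rw [hwx, ← mul_assoc, this, one_mul]
  have hnorm : ∀ x, ‖w x‖ = ‖v x‖ := fun x => by rw [hwx, norm_mul, gE_norm, one_mul]
  have hpt := lap_pointwise φ hφ_smooth M hM Λ l hl q κ (by simp [hκ]) (by simp [hκ]) w
    (fun x hx => by rw [hwx, hv0 x hx, mul_zero])
  rw [← hvw, ← hKdef] at hpt
  set g := opP φ l v with hg
  by_cases htop : eLpNorm g 2 volume = ⊤
  · rw [htop, top_add, ENNReal.mul_top (by simpa using Real.sqrt_pos.2 hC1p)]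
    exact le_top
  have hgc : Continuous g := by
    have hd : ∀ (f : R2 → ℝ), ContDiff ℝ (⊤ : ℕ∞) f → ∀ j, ContDiff ℝ (⊤ : ℕ∞) (pdR j f) := fun f hf j =>
      (hf.fderiv_right (m := (⊤ : ℕ∞)) (by norm_cast)).clm_apply contDiff_const
    have c0 : ∀ j, ContDiff ℝ (⊤ : ℕ∞) (pdR j φ) := hd φ hφ_smooth
    have c1 : ∀ j, Continuous (pdR j φ) := fun j => (c0 j).continuous
    have c2 : ∀ i j, Continuous (pdR i (pdR j φ)) := fun i j => (hd _ (c0 j) i).continuous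
    have c3 : Continuous (pdR 1 (fun y => - pdR 0 φ y)) := (hd _ (c0 0).neg 1).continuous
    have c4 : Continuous (lapR φ) := (c2 0 0).add (c2 1 1)
    have c5 : Continuous (gE κ) := (gE_contDiff κ).continuous
    have c6 := w.continuous
    have c7 := (lapS w).continuous
    have c8 : ∀ j, Continuous (∂_{e2 j} w : 𝓢(R2, ℂ)) := fun j => SchwartzMap.continuous _
    have c80 := c8 0
    have c81 := c8 1
    have c10 := c1 0
    have c11 := c1 1
    have c201 := c2 0 1
    rw [hg, hvw, funext (opP_gauge φ hφ_smooth l κ w)]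
    fun_prop
  have hgL : MemLp g 2 volume := ⟨hgc.aestronglyMeasurable, lt_top_iff_ne_top.2 htop⟩
  have hgi : Integrable (fun x => ‖g x‖ ^ 2) := hgL.integrable_norm_pow (by norm_num)
  have hL2 := lap_L2 w g hgi K hK hpt
  have hwu : S2 w ≤ S2 u := by
    refine integral_mono (sq_int _) (sq_int _) fun x => ?_
    have : ‖w x‖ ≤ ‖u x‖ := by
      rw [hnorm, hv, norm_mul, Complex.norm_real, Real.norm_of_nonneg (hβ_range _).1]
      exact mul_le_of_le_one_left (norm_nonneg _) (hβ_range _).2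
    simp only
    gcongr
  have hfin : ∀ x, ‖v x‖ ≤ √C1 * (√(S2 g) + √(S2 u)) := by
    intro x
    have h1 := hsup w x
    rw [hnorm] at h1
    have hgn := S2_nonneg g
    have hun := S2_nonneg u
    have h2 : S2 w + S2 (lapS w) ≤ (128 + 1 + 8 * K ^ 2 + 16 * K ^ 4) * (S2 g + S2 u) := by
      have k0 : 0 ≤ 8 * K ^ 2 + 16 * K ^ 4 := by positivity
      nlinarith [mul_le_mul_of_nonneg_left hwu k0, mul_nonneg k0 hgn]
    have h3 : ‖v x‖ ^ 2 ≤ C1 * (S2 g + S2 u) := by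
      refine h1.trans ((mul_le_mul_of_nonneg_left h2 hC0).trans ?_)
      rw [hC1]; nlinarith
    have h4 : ‖v x‖ ≤ √(C1 * (S2 g + S2 u)) := Real.le_sqrt_of_sq_le h3
    refine h4.trans ?_
    rw [Real.sqrt_mul hC1p.le]
    gcongr
    rw [Real.sqrt_le_left (by positivity)]
    nlinarith [Real.sq_sqrt hgn, Real.sq_sqrt hun, mul_nonneg (Real.sqrt_nonneg (S2 g)) (Real.sqrt_nonneg (S2 u))]
  rw [eLp_eq g hgL, eLp_eq u (u.memLp 2 volume), ← ENNReal.ofReal_add (Real.sqrt_nonneg _) (Real.sqrt_nonneg _),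
    ← ENNReal.ofReal_mul (Real.sqrt_nonneg _), eLpNorm_exponent_top]
  refine eLpNormEssSup_le_of_ae_bound (Filter.Eventually.of_forall hfin)
end
end
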